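/- arXiv:2102.09406 — 3 statements merged into one kernel-verified Lean document; each statement's English description precedes it below -/
import Mathlib

section
/- Under the multi-cluster game setup and the algorithm below, there exists a unique Nash equilibrium x* ∈ ℝ^q of the game (i.e., a unique point with F^h((x*)^h, (x*)^{-h}) ≤ F^h(x^h, (x*)^{-h}) for every x^h ∈ ℝ^{q_h} and every cluster h, where F^h = Σ_{i=1}^{n_h} f_i^h), this x* satisfies g^h(x*) = 0 for all h, and there exist a step-size α > 0, a constant c > 0 and a rate ρ ∈ (0,1) such that for all agents i, j and all k: ‖x_i(k) − x*‖ ≤ c ρ^k; in particular all local estimates x_i(k) converge to the common limit x* at a linear (geometric) rate. -/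
noncomputable section

/-- Indexing of agents / coordinates grouped into clusters: `ℝ^q = ℝ^{q_1} × ⋯ × ℝ^{q_H}`
is modelled as functions on `(h : Fin H) × Fin (qh h)`, and similarly the `n = ∑ n_h`
agents are indexed by `(h : Fin H) × Fin (nh h)` (ordered by cluster). -/
abbrev Clustered (H : ℕ) (d : Fin H → ℕ) := (h : Fin H) × Fin (d h)

/-- Replace the cluster-`h` block of `x` by `z`, i.e. form `(z, x^{-h})`. -/
def blockPatch {H : ℕ} {qh : Fin H → ℕ} (x : Clustered H qh → ℝ)
    (h : Fin H) (z : Fin (qh h) → ℝ) : Clustered H qh → ℝ :=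
  fun j => if hj : j.1 = h then z (hj ▸ j.2) else x j

/-- `g` is the partial gradient of `f` with respect to the cluster-`h` block at
the point `x`: the map `z ↦ f (z, x^{-h})` has derivative `w ↦ ∑ⱼ g j * w j` at `x^h`. -/
def HasBlockGradient {H : ℕ} {qh : Fin H → ℕ}
    (f : (Clustered H qh → ℝ) → ℝ) (h : Fin H)
    (g : Fin (qh h) → ℝ) (x : Clustered H qh → ℝ) : Prop :=
  HasFDerivAt (fun z : Fin (qh h) → ℝ => f (blockPatch x h z))
    (∑ j, g j • (ContinuousLinearMap.proj j : (Fin (qh h) → ℝ) →L[ℝ] ℝ))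
    (fun j => x ⟨h, j⟩)

/-- Frobenius norm of a real matrix. -/
def frobNorm {m q : Type*} [Fintype m] [Fintype q] (A : Matrix m q ℝ) : ℝ :=
  Real.sqrt (∑ i, ∑ j, (A i j) ^ 2)

/-- Weighted Frobenius norm `‖A‖_F^u = ‖diag(√u) A‖_F`. -/
def frobNormW {n q : Type*} [Fintype n] [Fintype q] [DecidableEq n]
    (w : n → ℝ) (A : Matrix n q ℝ) : ℝ :=
  frobNorm (Matrix.diagonal (fun i => Real.sqrt (w i)) * A)

/-- Weighted Frobenius norm `‖B‖_F^{v} = ‖diag(√v)⁻¹ B‖_F`. -/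
def frobNormWinv {n q : Type*} [Fintype n] [Fintype q] [DecidableEq n]
    (w : n → ℝ) (A : Matrix n q ℝ) : ℝ :=
  frobNorm (Matrix.diagonal (fun i => (Real.sqrt (w i))⁻¹) * A)

/-- Spectral norm of a square real matrix: operator norm on Euclidean space. -/
def specNorm {n : Type*} [Fintype n] [DecidableEq n] (A : Matrix n n ℝ) : ℝ :=
  ‖LinearMap.toContinuousLinearMap (Matrix.toEuclideanLin A)‖

/-- The matrix all of whose rows equal `w` (e.g. `1 uᵀ` or `1 x̄`). -/
def rowRep (N : Type*) {Q : Type*} (w : Q → ℝ) : Matrix N Q ℝ :=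
  Matrix.of fun _ j => w j

/-- The block-diagonal `n × q` matrix `blockdiag{y^1, …, y^H}` built from
per-cluster matrices `y^h ∈ ℝ^{n_h × q_h}`. -/
def blockDiag {H : ℕ} {nh qh : Fin H → ℕ}
    (y : (h : Fin H) → Matrix (Fin (nh h)) (Fin (qh h)) ℝ) :
    Matrix (Clustered H nh) (Clustered H qh) ℝ :=
  Matrix.of fun i j => if hij : i.1 = j.1 then y i.1 i.2 (hij.symm ▸ j.2) else 0

/-- The matrix `G^h` of cluster-`h` partial gradients, evaluated at the rows of
the estimation matrix `x` belonging to cluster `h`. -/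
def gradMat {H : ℕ} {nh qh : Fin H → ℕ}
    (gradf : (h : Fin H) → (i : Fin (nh h)) → (Clustered H qh → ℝ) → Fin (qh h) → ℝ)
    (h : Fin H) (x : Matrix (Clustered H nh) (Clustered H qh) ℝ) :
    Matrix (Fin (nh h)) (Fin (qh h)) ℝ :=
  Matrix.of fun i jj => gradf h i (x ⟨h, i⟩) jj



theorem sg_gain (K σ κ α0 : ℝ) (hK : 0 < K) (hσ0 : 0 ≤ σ) (hσ : σ < 1) (hκ : 0 < κ) (hα0 : 0 < α0) :
    ∃ α, 0 < α ∧ α < α0 ∧ ∃ ρ, 0 < ρ ∧ ρ < 1 ∧ ∃ p r, 0 < p ∧ 0 < r ∧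
      ∀ a b c a' b' c' : ℝ, 0 ≤ a → 0 ≤ b → 0 ≤ c →
        a' ≤ σ * a + α * (K * (a + b + c)) →
        b' ≤ σ * b + K * a + α * (K * (a + b + c)) →
        c' ≤ (1 - α * κ) * c + α * (K * (a + b)) →
        p * a' + b' + r * c' ≤ ρ * (p * a + b + r * c) := by
  have h1 : 0 < 1 - σ := by linarith
  obtain ⟨p, hp⟩ : ∃ p, p = 2 * (K + 1) / (1 - σ) := ⟨_, rfl⟩
  have hpm : p * (1 - σ) = 2 * (K + 1) := by rw [hp]; field_simp
  have hp2 : 2 ≤ p := by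
    rw [hp, le_div_iff₀ h1]; nlinarith
  obtain ⟨r, hr⟩ : ∃ r, r = 2 * K * (p + 1) / κ := ⟨_, rfl⟩
  have hrm : r * κ = 2 * K * (p + 1) := by rw [hr]; field_simp
  have hr0 : 0 < r := by rw [hr]; positivity
  obtain ⟨M, hM⟩ : ∃ M, M = K * (p + 1) + r * K := ⟨_, rfl⟩
  have hM0 : 0 < M := by rw [hM]; positivity
  obtain ⟨α, hα⟩ : ∃ α, α = min (min (α0 / 2) (1 / κ)) (min ((1 - σ) / 2 / M) (1 / M)) := ⟨_, rfl⟩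
  have hα1 : 0 < α := by rw [hα]; positivity
  have hα2 : α ≤ α0 / 2 := by
    rw [hα]; exact (min_le_left _ _).trans (min_le_left _ _)
  have hα3 : α * κ ≤ 1 := by
    rw [← le_div_iff₀ hκ, hα]; exact (min_le_left _ _).trans (min_le_right _ _)
  have hα4 : α * M ≤ (1 - σ) / 2 := by
    rw [← le_div_iff₀ hM0, hα]; exact (min_le_right _ _).trans (min_le_left _ _)
  have hα5 : α * M ≤ 1 := by
    rw [← le_div_iff₀ hM0, hα]; exact (min_le_right _ _).trans (min_le_right _ _)
  obtain ⟨ρ, hρ⟩ : ∃ ρ, ρ = max (max (1 - 1 / p) ((1 + σ) / 2)) (1 - α * κ / 2) := ⟨_, rfl⟩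
  have hρ1 : 1 - 1 / p ≤ ρ := by rw [hρ]; exact (le_max_left _ _).trans (le_max_left _ _)
  have hρ2 : (1 + σ) / 2 ≤ ρ := by rw [hρ]; exact (le_max_right _ _).trans (le_max_left _ _)
  have hρ3 : 1 - α * κ / 2 ≤ ρ := by rw [hρ]; exact le_max_right _ _
  have hp0 : 0 < p := by linarith
  have hρp : p - 1 ≤ ρ * p := by
    have := mul_le_mul_of_nonneg_right hρ1 hp0.le
    have h2 : (1 - 1 / p) * p = p - 1 := by field_simp
    linarith
  refine ⟨α, hα1, by linarith, ρ, by linarith, ?_, p, r, hp0, hr0, ?_⟩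
  · rw [hρ]
    refine max_lt (max_lt ?_ (by linarith)) ?_
    · have : 0 < 1 / p := by positivity
      linarith
    · have : 0 < α * κ := by positivity
      linarith
  intro a b c a' b' c' ha hb hc h1 h2 h3
  have e1 := mul_le_mul_of_nonneg_left h1 hp0.le
  have e3 := mul_le_mul_of_nonneg_left h3 hr0.le
  have f1 : (p * σ + K + α * M) * a ≤ ρ * p * a := by
    apply mul_le_mul_of_nonneg_right _ ha
    nlinarith
  have f2 : (σ + α * M) * b ≤ ρ * b := by
    apply mul_le_mul_of_nonneg_right _ hb
    linarith
  have f3 : (1 - α * κ / 2) * (r * c) ≤ ρ * (r * c) :=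
    mul_le_mul_of_nonneg_right hρ3 (by positivity)
  have f4 : (1 - α * κ / 2) * (r * c) = r * c - α * κ * r * c + α * (K * (p+1)) * c := by
    have : α * κ / 2 * (r * c) = α * (r * κ) * c / 2 := by ring
    rw [sub_mul, this, hrm]
    have : α * κ * r * c = α * (r * κ) * c := by ring
    rw [this, hrm]; ring
  subst hM
  nlinarith

theorem sg_perron {N : Type*} [Fintype N] [DecidableEq N] [Nonempty N] (R : Matrix N N ℝ)
    (hRnonneg : ∀ i j, 0 ≤ R i j) (hRrow : ∀ i, ∑ j, R i j = 1)
    (hRirr : ∀ i j, ∃ k : ℕ, 1 ≤ k ∧ 0 < (R ^ k) i j) :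
    ∃ u : N → ℝ, (∀ i, 0 < u i) ∧ ∑ i, u i = 1 ∧ ∀ j, ∑ i, u i * R i j = u j := by
  have hdet : (R - 1).det = 0 := by
    apply Matrix.exists_mulVec_eq_zero_iff.1
    refine ⟨fun _ => 1, ?_, ?_⟩
    · intro h
      have := congrFun h (Classical.arbitrary N)
      simp at this
    · ext i
      rw [Matrix.sub_mulVec, Matrix.one_mulVec]
      simp [Matrix.mulVec, dotProduct, hRrow]
  obtain ⟨w, hw0, hw⟩ := Matrix.exists_vecMul_eq_zero_iff.2 hdet
  have hw' : ∀ j, ∑ i, w i * R i j = w j := by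
    intro j
    have := congrFun hw j
    simp only [Matrix.vecMul_sub, Matrix.vecMul_one, Pi.sub_apply, Pi.zero_apply] at this
    simp only [Matrix.vecMul, dotProduct] at this
    linarith
  have hle : ∀ j, |w j| ≤ ∑ i, |w i| * R i j := by
    intro j
    rw [← hw' j]
    refine (Finset.abs_sum_le_sum_abs _ _).trans (le_of_eq ?_)
    refine Finset.sum_congr rfl fun i _ => ?_
    rw [abs_mul, abs_of_nonneg (hRnonneg i j)]
  have hsum : ∑ j, |w j| = ∑ j, ∑ i, |w i| * R i j := by
    rw [Finset.sum_comm]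
    refine Finset.sum_congr rfl fun i _ => ?_
    rw [← Finset.mul_sum, hRrow, mul_one]
  have heq : ∀ j, ∑ i, |w i| * R i j = |w j| := by
    have := (Finset.sum_eq_sum_iff_of_le (fun j _ => hle j)).1 hsum
    intro j
    exact (this j (Finset.mem_univ j)).symm
  have hpow : ∀ (k : ℕ) j, ∑ i, |w i| * (R ^ k) i j = |w j| := by
    intro k
    induction k with
    | zero => intro j; simp [Matrix.one_apply]
    | succ k ih =>
      intro j
      simp only [pow_succ, Matrix.mul_apply, Finset.mul_sum]
      rw [Finset.sum_comm, ← heq j]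
      refine Finset.sum_congr rfl fun l _ => ?_
      rw [← ih l, Finset.sum_mul]
      refine Finset.sum_congr rfl fun i _ => ?_
      ring
  have hpn : ∀ (k : ℕ) i j, 0 ≤ (R ^ k) i j := by
    intro k
    induction k with
    | zero => intro i j; simp only [pow_zero, Matrix.one_apply]; split_ifs <;> norm_num
    | succ k ih =>
      intro i j
      rw [pow_succ, Matrix.mul_apply]
      exact Finset.sum_nonneg fun l _ => mul_nonneg (ih _ _) (hRnonneg _ _)
  obtain ⟨i0, hi0⟩ : ∃ i, w i ≠ 0 := by
    by_contra! h
    exact hw0 (funext h)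
  have hpos : ∀ j, 0 < |w j| := by
    intro j
    obtain ⟨k, _, hk⟩ := hRirr i0 j
    rw [← hpow k j]
    refine lt_of_lt_of_le (mul_pos (abs_pos.2 hi0) hk) ?_
    exact Finset.single_le_sum (f := fun i => |w i| * (R ^ k) i j)
      (fun i _ => mul_nonneg (abs_nonneg _) (hpn k i j)) (Finset.mem_univ i0)
  have hS : 0 < ∑ j, |w j| := Finset.sum_pos (fun j _ => hpos j) Finset.univ_nonempty
  refine ⟨fun i => |w i| / ∑ j, |w j|, fun i => div_pos (hpos i) hS, ?_, ?_⟩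
  · rw [← Finset.sum_div, div_self hS.ne']
  · intro j
    have : |w j| / ∑ j, |w j| = (∑ i, |w i| * R i j) / ∑ j, |w j| := by rw [heq j]
    refine Eq.trans ?_ this.symm
    rw [Finset.sum_div]
    refine Finset.sum_congr rfl fun i _ => ?_
    ring

theorem sg_conn {N : Type*} [Fintype N] [DecidableEq N] (R : Matrix N N ℝ)
    (hRirr : ∀ i j, ∃ k : ℕ, 1 ≤ k ∧ 0 < (R ^ k) i j) (hRnonneg : ∀ i j, 0 ≤ R i j)
    (x : N → ℝ) (hx : ∀ i j, 0 < R i j → x i = x j) : ∀ i j, x i = x j := by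
  have key : ∀ (k : ℕ) i j, (R ^ k) i j ≠ 0 → x i = x j := by
    intro k
    induction k with
    | zero =>
      intro i j h
      rw [pow_zero, Matrix.one_apply] at h
      split_ifs at h with hh
      · rw [hh]
      · simp at h
    | succ k ih =>
      intro i j h
      rw [pow_succ, Matrix.mul_apply] at h
      obtain ⟨l, _, hl⟩ := Finset.exists_ne_zero_of_sum_ne_zero h
      rw [ih i l (left_ne_zero_of_mul hl)]
      exact hx l j (lt_of_le_of_ne (hRnonneg _ _) (right_ne_zero_of_mul hl).symm)
  intro i j
  obtain ⟨k, _, hk⟩ := hRirr i j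
  exact key k i j hk.ne'

theorem sg_contr {N : Type*} [Fintype N] [Nonempty N] (R : Matrix N N ℝ)
    (hRnonneg : ∀ i j, 0 ≤ R i j) (hRrow : ∀ i, ∑ j, R i j = 1)
    (hRdiag : ∀ i, 0 < R i i)
    (hconn : ∀ x : N → ℝ, (∀ i j, 0 < R i j → x i = x j) → ∀ i j, x i = x j)
    (u : N → ℝ) (hu : ∀ i, 0 < u i) (hinv : ∀ j, ∑ i, u i * R i j = u j) :
    ∃ σ, 0 ≤ σ ∧ σ < 1 ∧ ∀ x : N → ℝ, ∑ i, u i * x i = 0 →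
      ∑ i, u i * (∑ j, R i j * x j) ^ 2 ≤ σ ^ 2 * ∑ i, u i * x i ^ 2 := by
  have hstrict : ∀ x : N → ℝ, ∑ i, u i * x i = 0 → 
      ∑ i, u i * x i ^ 2 ≤ ∑ i, u i * (∑ j, R i j * x j) ^ 2 → x = 0 := by
    intro x hx0 hle
    have hid : ∑ i, ∑ j, u i * (R i j * (x j - ∑ l, R i l * x l) ^ 2) =
        ∑ i, u i * x i ^ 2 - ∑ i, u i * (∑ j, R i j * x j) ^ 2 := by
      have e1 : ∑ i, u i * x i ^ 2 = ∑ i, ∑ j, u i * (R i j * x j ^ 2) := by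
        rw [Finset.sum_comm]
        refine Finset.sum_congr rfl fun j _ => ?_
        have : u j * x j ^ 2 = (∑ i, u i * R i j) * x j ^ 2 := by rw [hinv j]
        rw [this, Finset.sum_mul]
        refine Finset.sum_congr rfl fun i _ => by ring
      rw [e1, ← Finset.sum_sub_distrib]
      refine Finset.sum_congr rfl fun i _ => ?_
      rw [← Finset.mul_sum, ← Finset.mul_sum, ← mul_sub]
      congr 1
      obtain ⟨m, hm⟩ : ∃ m, m = ∑ l, R i l * x l := ⟨_, rfl⟩
      rw [← hm]
      have : ∀ j, R i j * (x j - m) ^ 2 = R i j * x j ^ 2 - 2 * m * (R i j * x j) + m ^ 2 * R i j := by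
        intro j; ring
      simp only [this, Finset.sum_add_distrib, Finset.sum_sub_distrib, ← Finset.mul_sum, hRrow, ← hm]
      ring
    have hnn : ∀ i j, 0 ≤ u i * (R i j * (x j - ∑ l, R i l * x l) ^ 2) := fun i j =>
      mul_nonneg (hu i).le (mul_nonneg (hRnonneg i j) (sq_nonneg _))
    have hz : ∑ i, ∑ j, u i * (R i j * (x j - ∑ l, R i l * x l) ^ 2) = 0 :=
      le_antisymm (by rw [hid]; linarith)
        (Finset.sum_nonneg fun i _ => Finset.sum_nonneg fun j _ => hnn i j)
    have hz1 : ∀ i j, 0 < R i j → x j = ∑ l, R i l * x l := by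
      intro i j hij
      have h1 := (Finset.sum_eq_zero_iff_of_nonneg
        (fun i _ => Finset.sum_nonneg fun j _ => hnn i j)).1 hz i (Finset.mem_univ i)
      have h2 := (Finset.sum_eq_zero_iff_of_nonneg (fun j _ => hnn i j)).1 h1 j (Finset.mem_univ j)
      have h3 := (mul_eq_zero.1 ((mul_eq_zero.1 h2).resolve_left (hu i).ne')).resolve_left hij.ne'
      exact sub_eq_zero.1 (pow_eq_zero_iff (two_ne_zero) |>.1 h3)
    have hc := hconn x (fun i j hij => (hz1 i i (hRdiag i)).trans (hz1 i j hij).symm)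
    ext i
    have : ∑ l, u l * x l = (∑ l, u l) * x i := by
      rw [Finset.sum_mul]
      exact Finset.sum_congr rfl fun l _ => by rw [hc l i]
    have hS : 0 < ∑ j, u j := Finset.sum_pos (fun j _ => hu j) Finset.univ_nonempty
    rw [hx0] at this
    exact ((mul_eq_zero.1 this.symm).resolve_left hS.ne')
  -- compactness
  let q : (N → ℝ) → ℝ := fun x => ∑ i, u i * (∑ j, R i j * x j) ^ 2
  let Q : (N → ℝ) → ℝ := fun x => ∑ i, u i * x i ^ 2
  have hqc : Continuous q := by fun_prop
  have hQc : Continuous Q := by fun_prop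
  have hQpos : ∀ x, x ≠ 0 → 0 < Q x := by
    intro x hx
    obtain ⟨i, hi⟩ : ∃ i, x i ≠ 0 := by
      by_contra! h
      exact hx (funext h)
    exact Finset.sum_pos' (fun i _ => mul_nonneg (hu i).le (sq_nonneg _))
      ⟨i, Finset.mem_univ i, mul_pos (hu i) (by positivity)⟩
  have hqn : ∀ x, 0 ≤ q x := fun x =>
    Finset.sum_nonneg fun i _ => mul_nonneg (hu i).le (sq_nonneg _)
  let Ks : Set (N → ℝ) := Metric.sphere 0 1 ∩ {x | ∑ i, u i * x i = 0}
  have hKs : IsCompact Ks :=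
    (isCompact_sphere _ _).inter_right (isClosed_eq (by fun_prop) continuous_const)
  have hKne : ∀ x ∈ Ks, x ≠ 0 := by
    rintro x ⟨hx, _⟩ rfl
    simp at hx
  obtain ⟨τ, hτ0, hτ1, hτ⟩ : ∃ τ, 0 ≤ τ ∧ τ < 1 ∧ ∀ x ∈ Ks, q x ≤ τ * Q x := by
    rcases Ks.eq_empty_or_nonempty with he | hne
    · exact ⟨0, le_rfl, zero_lt_one, by simp [he]⟩
    · obtain ⟨x0, hx0, hmax⟩ := hKs.exists_isMaxOn hne
        (f := fun x => q x / Q x)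
        (hqc.continuousOn.div hQc.continuousOn fun x hx => (hQpos x (hKne x hx)).ne')
      refine ⟨q x0 / Q x0, div_nonneg (hqn _) (hQpos x0 (hKne x0 hx0)).le, ?_, ?_⟩
      · rw [div_lt_one (hQpos x0 (hKne x0 hx0))]
        by_contra! h
        exact hKne x0 hx0 (hstrict x0 hx0.2 h)
      · intro x hx
        have := hmax hx
        simp only [Set.mem_ofPred_eq] at this
        rwa [div_le_iff₀ (hQpos x (hKne x hx))] at this
  refine ⟨Real.sqrt τ, Real.sqrt_nonneg _, ?_, ?_⟩
  · rw [Real.sqrt_lt' one_pos]; simpa using hτ1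
  intro x hx
  rw [Real.sq_sqrt hτ0]
  change q x ≤ τ * Q x
  by_cases hx0 : x = 0
  · subst hx0; simp [q, Q]
  have hn : 0 < ‖x‖ := norm_pos_iff.2 hx0
  have hmem : (‖x‖⁻¹ • x) ∈ Ks := by
    refine ⟨?_, ?_⟩
    · simp [norm_smul, hn.ne']
    · simp only [Set.mem_ofPred_eq, Pi.smul_apply, smul_eq_mul]
      have : ∀ i, u i * (‖x‖⁻¹ * x i) = ‖x‖⁻¹ * (u i * x i) := fun i => by ring
      simp only [this, ← Finset.mul_sum, hx, mul_zero]
  have h := hτ _ hmem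
  have hq : q (‖x‖⁻¹ • x) = (‖x‖⁻¹) ^ 2 * q x := by
    simp only [q, Pi.smul_apply, smul_eq_mul, Finset.mul_sum]
    refine Finset.sum_congr rfl fun i _ => ?_
    have : ∀ j, R i j * (‖x‖⁻¹ * x j) = ‖x‖⁻¹ * (R i j * x j) := fun i => by ring
    simp only [this, ← Finset.mul_sum]
    ring
  have hQ : Q (‖x‖⁻¹ • x) = (‖x‖⁻¹) ^ 2 * Q x := by
    simp only [Q, Pi.smul_apply, smul_eq_mul, Finset.mul_sum]
    refine Finset.sum_congr rfl fun i _ => ?_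
    ring
  rw [hq, hQ, mul_left_comm] at h
  exact le_of_mul_le_mul_left h (by positivity)

theorem sg_contrC {N : Type*} [Fintype N] [DecidableEq N] [Nonempty N] (C : Matrix N N ℝ)
    (hCnonneg : ∀ i j, 0 ≤ C i j) (hCcol : ∀ j, ∑ i, C i j = 1)
    (hCdiag : ∀ i, 0 < C i i)
    (hCirr : ∀ i j, ∃ k : ℕ, 1 ≤ k ∧ 0 < (C ^ k) i j) :
    ∃ v : N → ℝ, (∀ i, 0 < v i) ∧ ∑ i, v i = 1 ∧ (∀ i, ∑ j, C i j * v j = v i) ∧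
    ∃ σ, 0 ≤ σ ∧ σ < 1 ∧ ∀ y : N → ℝ, ∑ i, y i = 0 →
      ∑ i, (v i)⁻¹ * (∑ j, C i j * y j) ^ 2 ≤ σ ^ 2 * ∑ i, (v i)⁻¹ * y i ^ 2 := by
  obtain ⟨v, hv, hv1, hvi⟩ := sg_perron C.transpose (fun i j => hCnonneg j i)
    (fun i => by simpa using hCcol i) (fun i j => by
      obtain ⟨k, hk, h⟩ := hCirr j i
      exact ⟨k, hk, by rw [← Matrix.transpose_pow]; exact h⟩)
  have hvi' : ∀ i, ∑ j, C i j * v j = v i := by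
    intro i
    rw [← hvi i]
    refine Finset.sum_congr rfl fun j _ => ?_
    rw [Matrix.transpose_apply, mul_comm]
  refine ⟨v, hv, hv1, hvi', ?_⟩
  obtain ⟨σ, h0, h1, h⟩ := sg_contr (Matrix.of fun i j => C i j * v j / v i)
    (fun i j => div_nonneg (mul_nonneg (hCnonneg i j) (hv j).le) (hv i).le)
    (fun i => by
      simp only [Matrix.of_apply]
      rw [← Finset.sum_div, hvi', div_self (hv i).ne'])
    (fun i => div_pos (mul_pos (hCdiag i) (hv i)) (hv i))
    (fun x hx => sg_conn C hCirr hCnonneg x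
      (fun i j hij => hx i j (div_pos (mul_pos hij (hv j)) (hv i)))) v hv
    (fun j => by
      have : ∀ i, v i * (C i j * v j / v i) = C i j * v j := fun i => by
        have := (hv i).ne'
        field_simp
      simp only [Matrix.of_apply, this, ← Finset.sum_mul, hCcol, one_mul])
  refine ⟨σ, h0, h1, fun y hy => ?_⟩
  have := h (fun i => y i / v i) (by
    rw [← hy]
    refine Finset.sum_congr rfl fun i _ => ?_
    have := (hv i).ne'
    field_simp)
  convert this using 2
  · rename_i i _
    have hvv := (hv i).ne'
    have : ∑ j, (Matrix.of fun i j => C i j * v j / v i) i j * (y j / v j) = (∑ j, C i j * y j) / v i := by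
      rw [Finset.sum_div]
      refine Finset.sum_congr rfl fun j _ => ?_
      have := (hv j).ne'
      simp only [Matrix.of_apply]
      field_simp
    rw [this]
    field_simp
  · refine Finset.sum_congr rfl fun i _ => ?_
    have hvv := (hv i).ne'
    field_simp

/-- The abstract gradient-tracking convergence theorem. -/
theorem sg_abstract {X Y S : Type*} [NormedAddCommGroup X] [NormedSpace ℝ X]
    [NormedAddCommGroup Y] [NormedSpace ℝ Y] [NormedAddCommGroup S] [NormedSpace ℝ S]
    (A : X →L[ℝ] X) (B : Y →L[ℝ] X) (C : Y →L[ℝ] Y) (ub : X →L[ℝ] S) (one : S →L[ℝ] X)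
    (sm : Y →L[ℝ] S) (vm : S →L[ℝ] Y) (G : X → Y)
    (KG : ℝ) (hKG : 0 < KG) (hG : ∀ x x', ‖G x - G x'‖ ≤ KG * ‖x - x'‖)
    (hubA : ∀ x, ub (A x) = ub x) (hA1 : ∀ s, A (one s) = one s) (hub1 : ∀ s, ub (one s) = s)
    (hsmC : ∀ y, sm (C y) = sm y) (hCv : ∀ s, C (vm s) = vm s) (hsv : ∀ s, sm (vm s) = s)
    (na : Seminorm ℝ X) (nb : Seminorm ℝ Y) (nc : Seminorm ℝ S)
    (K : ℝ) (hK : 0 < K)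
    (hna : ∀ x, na x ≤ K * ‖x‖) (hna' : ∀ x, ‖x‖ ≤ K * na x)
    (hnb : ∀ x, nb x ≤ K * ‖x‖) (hnb' : ∀ x, ‖x‖ ≤ K * nb x)
    (hnc : ∀ x, nc x ≤ K * ‖x‖) (hnc' : ∀ x, ‖x‖ ≤ K * nc x)
    (σ : ℝ) (hσ0 : 0 ≤ σ) (hσ : σ < 1)
    (hAc : ∀ x, ub x = 0 → na (A x) ≤ σ * na x)
    (hCc : ∀ y, sm y = 0 → nb (C y) ≤ σ * nb y)
    (ss : S) (hss : sm (G (one ss)) = 0)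
    (κ α0 : ℝ) (hκ : 0 < κ) (hα0 : 0 < α0)
    (hstep : ∀ α, 0 < α → α < α0 → ∀ s,
      nc (s - ss - α • ub (B (vm (sm (G (one s)))))) ≤ (1 - α * κ) * nc (s - ss)) :
    ∃ α : ℝ, 0 < α ∧ ∃ ρ : ℝ, 0 < ρ ∧ ρ < 1 ∧
      ∀ (x : ℕ → X) (y : ℕ → Y), y 0 = G (x 0) →
        (∀ k, x (k + 1) = A (x k - α • B (y k))) →
        (∀ k, y (k + 1) = C (y k) + G (x (k + 1)) - G (x k)) →
        ∃ c, 0 < c ∧ ∀ k, ‖x k - one ss‖ ≤ c * ρ ^ k := by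
  -- constants
  obtain ⟨K1, hK1, hy⟩ : ∃ K1, 0 ≤ K1 ∧ ∀ (x : X) (y : Y), sm y = sm (G x) →
      ‖y‖ ≤ K1 * (na (x - one (ub x)) + nb (y - vm (sm y)) + nc (ub x - ss)) := by
    refine ⟨K + ‖vm‖ * (‖sm‖ * (KG * (K + ‖one‖ * K))), by positivity, ?_⟩
    intro x y hyx
    have h1 : ‖y‖ ≤ ‖y - vm (sm y)‖ + ‖vm (sm y)‖ := by
      simpa using norm_add_le (y - vm (sm y)) (vm (sm y))
    have h2 : ‖vm (sm y)‖ ≤ ‖vm‖ * (‖sm‖ * (KG * ‖x - one ss‖)) := by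
      refine (vm.le_opNorm _).trans ?_
      have : sm y = sm (G x - G (one ss)) := by rw [map_sub, hss, hyx, sub_zero]
      rw [this]
      gcongr
      refine (sm.le_opNorm _).trans ?_
      gcongr
      exact hG _ _
    have h3 : ‖x - one ss‖ ≤ K * na (x - one (ub x)) + ‖one‖ * (K * nc (ub x - ss)) := by
      have : x - one ss = (x - one (ub x)) + one (ub x - ss) := by rw [map_sub]; abel
      rw [this]
      refine (norm_add_le _ _).trans ?_
      gcongr
      · exact hna' _
      · refine (one.le_opNorm _).trans ?_
        gcongr
        exact hnc' _
    have h4 : K * na (x - one (ub x)) + ‖one‖ * (K * nc (ub x - ss)) ≤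
        (K + ‖one‖ * K) * (na (x - one (ub x)) + nb (y - vm (sm y)) + nc (ub x - ss)) := by
      have ha := apply_nonneg na (x - one (ub x))
      have hb := apply_nonneg nb (y - vm (sm y))
      have hc := apply_nonneg nc (ub x - ss)
      have ho := norm_nonneg one
      have e1 : 0 ≤ K * (nb (y - vm (sm y)) + nc (ub x - ss)) := by positivity
      have e2 : 0 ≤ ‖one‖ * K * (na (x - one (ub x)) + nb (y - vm (sm y))) := by positivity
      nlinarith
    have h5 : ‖y - vm (sm y)‖ ≤
        K * (na (x - one (ub x)) + nb (y - vm (sm y)) + nc (ub x - ss)) := by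
      refine (hnb' _).trans ?_
      have ha := apply_nonneg na (x - one (ub x))
      have hc := apply_nonneg nc (ub x - ss)
      gcongr
      linarith
    calc ‖y‖ ≤ _ := h1
      _ ≤ K * (na (x - one (ub x)) + nb (y - vm (sm y)) + nc (ub x - ss)) +
          ‖vm‖ * (‖sm‖ * (KG * ((K + ‖one‖ * K) *
            (na (x - one (ub x)) + nb (y - vm (sm y)) + nc (ub x - ss))))) := by
          refine add_le_add h5 (h2.trans ?_)
          gcongr
          exact h3.trans h4
      _ = _ := by ring
  obtain ⟨K2, hK2, hQ⟩ : ∃ K2, 0 ≤ K2 ∧ ∀ y : Y, na (A (B y) - one (ub (B y))) ≤ K2 * ‖y‖ := by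
    refine ⟨K * ‖(A.comp B - one.comp (ub.comp B))‖, by positivity, fun y => ?_⟩
    refine (hna _).trans ?_
    rw [mul_assoc]
    gcongr
    exact (A.comp B - one.comp (ub.comp B)).le_opNorm y
  obtain ⟨K3, hK3, hP⟩ : ∃ K3, 0 ≤ K3 ∧ ∀ x x' : X,
      nb ((G x' - G x) - vm (sm (G x' - G x))) ≤ K3 * ‖x' - x‖ := by
    refine ⟨K * (‖ContinuousLinearMap.id ℝ Y - vm.comp sm‖ * KG), by positivity, fun x x' => ?_⟩
    refine (hnb _).trans ?_
    rw [mul_assoc]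
    gcongr
    refine ((ContinuousLinearMap.id ℝ Y - vm.comp sm).le_opNorm (G x' - G x)).trans ?_
    rw [mul_assoc]
    gcongr
    exact hG _ _
  obtain ⟨K4, hK4, hD⟩ : ∃ K4, 0 ≤ K4 ∧ ∀ x : X, ‖A x - x‖ ≤ K4 * na x := by
    refine ⟨‖A - ContinuousLinearMap.id ℝ X‖ * K, by positivity, fun x => ?_⟩
    refine ((A - ContinuousLinearMap.id ℝ X).le_opNorm x).trans ?_
    rw [mul_assoc]
    gcongr
    exact hna' x
  obtain ⟨K5, hK5, hE⟩ : ∃ K5, 0 ≤ K5 ∧ ∀ y : Y, ‖A (B y)‖ ≤ K5 * ‖y‖ :=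
    ⟨‖A.comp B‖, by positivity, fun y => (A.comp B).le_opNorm y⟩
  obtain ⟨K6, hK6, hF⟩ : ∃ K6, 0 ≤ K6 ∧ ∀ (x : X) (yt : Y),
      nc (ub (B (yt + vm (sm (G x - G (one (ub x))))))) ≤ K6 * (na (x - one (ub x)) + nb yt) := by
    refine ⟨K * (‖ub.comp B‖ * (K + ‖vm.comp sm‖ * (KG * K))), by positivity, fun x yt => ?_⟩
    refine (hnc _).trans ?_
    rw [mul_assoc]
    gcongr
    refine ((ub.comp B).le_opNorm _).trans ?_
    rw [mul_assoc]
    gcongr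
    refine (norm_add_le _ _).trans ?_
    have e1 := hnb' yt
    have e2 : ‖vm (sm (G x - G (one (ub x))))‖ ≤ ‖vm.comp sm‖ * (KG * K) * na (x - one (ub x)) := by
      refine ((vm.comp sm).le_opNorm _).trans ?_
      rw [mul_assoc, mul_assoc]
      gcongr
      exact (hG _ _).trans (by gcongr; exact hna' _)
    have ha := apply_nonneg na (x - one (ub x))
    have hb := apply_nonneg nb yt
    have e3 : 0 ≤ ‖vm.comp sm‖ * (KG * K) * nb yt := by positivity
    have e4 : 0 ≤ K * na (x - one (ub x)) := by positivity
    nlinarith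
  obtain ⟨Kt, hKt⟩ : ∃ Kt, Kt = 1 + K2 * K1 + K3 * K4 + K3 * (K5 * K1) + K6 := ⟨_, rfl⟩
  have p1 : 0 ≤ K2 * K1 := by positivity
  have p2 : 0 ≤ K3 * K4 := by positivity
  have p3 : 0 ≤ K3 * (K5 * K1) := by positivity
  obtain ⟨α, hα, hαα, ρ, hρ0, hρ1, p, r, hp, hr, hgain⟩ :=
    sg_gain Kt σ κ α0 (by rw [hKt]; positivity) hσ0 hσ hκ hα0
  refine ⟨α, hα, ρ, hρ0, hρ1, ?_⟩
  intro x y hy0 hx hyk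
  have hcons : ∀ k, sm (y k) = sm (G (x k)) := by
    intro k
    induction k with
    | zero => rw [hy0]
    | succ k ih => rw [hyk, map_sub, map_add, hsmC, ih]; abel
  let a : ℕ → ℝ := fun k => na (x k - one (ub (x k)))
  let b : ℕ → ℝ := fun k => nb (y k - vm (sm (y k)))
  let c : ℕ → ℝ := fun k => nc (ub (x k) - ss)
  have ha0 : ∀ k, 0 ≤ a k := fun k => apply_nonneg na _
  have hb0 : ∀ k, 0 ≤ b k := fun k => apply_nonneg nb _
  have hc0 : ∀ k, 0 ≤ c k := fun k => apply_nonneg nc _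
  have hyb : ∀ k, ‖y k‖ ≤ K1 * (a k + b k + c k) := fun k => hy (x k) (y k) (hcons k)
  have hsa : ∀ k, a (k + 1) ≤ σ * a k + α * (Kt * (a k + b k + c k)) := by
    intro k
    have e : x (k + 1) - one (ub (x (k + 1))) =
        A (x k - one (ub (x k))) - α • (A (B (y k)) - one (ub (B (y k)))) := by
      rw [hx, hubA]
      simp only [map_sub, map_smul, hA1, smul_sub]
      abel
    have e1 : a (k + 1) ≤ na (A (x k - one (ub (x k)))) +
        na (α • (A (B (y k)) - one (ub (B (y k))))) := by
      simp only [a, e]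
      exact map_sub_le_add na _ _
    refine e1.trans (add_le_add (hAc _ (by rw [map_sub, hub1, sub_self])) ?_)
    rw [map_smul_eq_mul, Real.norm_of_nonneg hα.le]
    gcongr
    refine (hQ _).trans ?_
    refine (mul_le_mul_of_nonneg_left (hyb k) hK2).trans ?_
    rw [← mul_assoc]
    have := ha0 k; have := hb0 k; have := hc0 k
    gcongr
    rw [hKt]; linarith
  have hsb : ∀ k, b (k + 1) ≤ σ * b k + Kt * a k + α * (Kt * (a k + b k + c k)) := by
    intro k
    have e : y (k + 1) - vm (sm (y (k + 1))) = C (y k - vm (sm (y k))) +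
        ((G (x (k+1)) - G (x k)) - vm (sm (G (x (k+1)) - G (x k)))) := by
      rw [hyk]
      simp only [map_sub, map_add, hsmC, hCv]
      abel
    have e1 : b (k + 1) ≤ nb (C (y k - vm (sm (y k)))) +
        nb ((G (x (k+1)) - G (x k)) - vm (sm (G (x (k+1)) - G (x k)))) := by
      simp only [b, e]
      exact map_add_le_add nb _ _
    rw [add_assoc]
    refine e1.trans (add_le_add (hCc _ (by rw [map_sub, hsv, sub_self])) ?_)
    have e2 : x (k + 1) - x k = (A (x k - one (ub (x k))) - (x k - one (ub (x k)))) -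
        α • A (B (y k)) := by
      rw [hx]
      simp only [map_sub, map_smul, hA1]
      abel
    have e3 : ‖x (k + 1) - x k‖ ≤ K4 * a k + α * (K5 * (K1 * (a k + b k + c k))) := by
      rw [e2]
      refine (norm_sub_le _ _).trans (add_le_add (hD _) ?_)
      rw [norm_smul, Real.norm_of_nonneg hα.le]
      gcongr
      exact (hE _).trans (mul_le_mul_of_nonneg_left (hyb k) hK5)
    refine (hP _ _).trans ((mul_le_mul_of_nonneg_left e3 hK3).trans ?_)
    have := ha0 k; have := hb0 k; have := hc0 k
    have f1 : K3 * K4 * a k ≤ Kt * a k := by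
      gcongr; rw [hKt]; linarith
    have f2 : α * (K3 * (K5 * K1) * (a k + b k + c k)) ≤ α * (Kt * (a k + b k + c k)) := by
      gcongr; rw [hKt]; linarith
    calc _ = K3 * K4 * a k + α * (K3 * (K5 * K1) * (a k + b k + c k)) := by ring
      _ ≤ _ := add_le_add f1 f2
  have hsc : ∀ k, c (k + 1) ≤ (1 - α * κ) * c k + α * (Kt * (a k + b k)) := by
    intro k
    have e : ub (x (k + 1)) - ss =
        (ub (x k) - ss - α • ub (B (vm (sm (G (one (ub (x k)))))))) -
        α • ub (B ((y k - vm (sm (y k))) + vm (sm (G (x k) - G (one (ub (x k))))))) := by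
      rw [hx, hubA]
      simp only [map_sub, map_smul, map_add, hcons, smul_add, smul_sub]
      abel
    have e1 : c (k + 1) ≤ nc (ub (x k) - ss - α • ub (B (vm (sm (G (one (ub (x k)))))))) +
        nc (α • ub (B ((y k - vm (sm (y k))) + vm (sm (G (x k) - G (one (ub (x k)))))))) := by
      simp only [c, e]
      exact map_sub_le_add nc _ _
    refine e1.trans (add_le_add (hstep α hα hαα _) ?_)
    rw [map_smul_eq_mul, Real.norm_of_nonneg hα.le]
    gcongr
    refine (hF _ _).trans ?_
    have := ha0 k; have := hb0 k
    change K6 * (a k + b k) ≤ _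
    gcongr
    rw [hKt]; linarith
  let W : ℕ → ℝ := fun k => p * a k + b k + r * c k
  have hW : ∀ k, W k ≤ W 0 * ρ ^ k := by
    intro k
    induction k with
    | zero => simp
    | succ k ih =>
      have := hgain (a k) (b k) (c k) _ _ _ (ha0 k) (hb0 k) (hc0 k) (hsa k) (hsb k) (hsc k)
      calc W (k + 1) ≤ ρ * W k := this
        _ ≤ ρ * (W 0 * ρ ^ k) := by gcongr
        _ = _ := by ring
  have hW0 : ∀ k, 0 ≤ W k := fun k => by
    have := ha0 k; have := hb0 k; have := hc0 k
    simp only [W]; positivity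
  have hfin : ∀ k, ‖x k - one ss‖ ≤ (K / p + ‖one‖ * K / r) * W k := by
    intro k
    have : x k - one ss = (x k - one (ub (x k))) + one (ub (x k) - ss) := by rw [map_sub]; abel
    rw [this]
    have g1 : ‖x k - one (ub (x k))‖ ≤ K / p * W k := by
      refine (hna' _).trans ?_
      have : a k ≤ W k / p := by
        rw [le_div_iff₀ hp]
        have := mul_nonneg hr.le (hc0 k); have := hb0 k
        simp only [W]; linarith
      calc K * a k ≤ K * (W k / p) := by gcongr
        _ = _ := by ring
    have g2 : ‖one (ub (x k) - ss)‖ ≤ ‖one‖ * K / r * W k := by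
      refine (one.le_opNorm _).trans ?_
      have : c k ≤ W k / r := by
        rw [le_div_iff₀ hr]
        have := mul_nonneg hp.le (ha0 k); have := hb0 k
        simp only [W]; linarith
      calc ‖one‖ * ‖ub (x k) - ss‖ ≤ ‖one‖ * (K * c k) := by gcongr; exact hnc' _
        _ ≤ ‖one‖ * (K * (W k / r)) := by gcongr
        _ = _ := by ring
    refine (norm_add_le _ _).trans ?_
    rw [add_mul]
    exact add_le_add g1 g2
  have hcc : 0 ≤ K / p + ‖one‖ * K / r := by positivity
  refine ⟨(K / p + ‖one‖ * K / r) * W 0 + 1, by have := mul_nonneg hcc (hW0 0); linarith, fun k => ?_⟩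
  refine (hfin k).trans ((mul_le_mul_of_nonneg_left (hW k) hcc).trans ?_)
  rw [← mul_assoc]
  gcongr
  linarith

theorem sg_norm {ι X : Type*} [Fintype ι] [NormedAddCommGroup X] [NormedSpace ℝ X]
    [FiniteDimensional ℝ X] (φ : ι → X →ₗ[ℝ] ℝ) (w : ι → ℝ) (hw : ∀ i, 0 < w i)
    (hinj : ∀ x, (∀ i, φ i x = 0) → x = 0) :
    ∃ (p : Seminorm ℝ X) (K : ℝ), 0 < K ∧ (∀ x, p x = Real.sqrt (∑ i, w i * φ i x ^ 2)) ∧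
      (∀ x, p x ≤ K * ‖x‖) ∧ (∀ x, ‖x‖ ≤ K * p x) := by
  let T : X →ₗ[ℝ] EuclideanSpace ℝ ι :=
    { toFun := fun x => WithLp.toLp 2 (fun i => Real.sqrt (w i) * φ i x)
      map_add' := fun x y => by ext i; simp [mul_add]
      map_smul' := fun c x => by ext i; simp; ring }
  have hT : ∀ x, ‖T x‖ = Real.sqrt (∑ i, w i * φ i x ^ 2) := by
    intro x
    rw [EuclideanSpace.norm_eq]
    congr 1
    refine Finset.sum_congr rfl fun i _ => ?_
    simp only [T, LinearMap.coe_mk, AddHom.coe_mk, Real.norm_eq_abs, sq_abs, mul_pow,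
      Real.sq_sqrt (hw i).le]
  have hker : LinearMap.ker T = ⊥ := by
    rw [LinearMap.ker_eq_bot']
    intro x hx
    apply hinj
    intro i
    have h := congrArg (fun z : EuclideanSpace ℝ ι => z i) hx
    have h' : Real.sqrt (w i) * φ i x = 0 := h
    exact (mul_eq_zero.1 h').resolve_left (Real.sqrt_pos.2 (hw i)).ne'
  obtain ⟨K1, hK1, hanti⟩ := T.exists_antilipschitzWith hker
  have hb := (LinearMap.toContinuousLinearMap T).le_opNorm
  refine ⟨(normSeminorm ℝ (EuclideanSpace ℝ ι)).comp T,
    K1 + ‖LinearMap.toContinuousLinearMap T‖, by positivity, ?_, ?_, ?_⟩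
  · intro x
    exact hT x
  · intro x
    refine (hb x).trans ?_
    gcongr
    have : (0 : ℝ) ≤ K1 := K1.2
    linarith
  · intro x
    have h1 : ‖x‖ ≤ K1 * ‖T x‖ := ZeroHomClass.bound_of_antilipschitz T hanti x
    refine h1.trans ?_
    change _ ≤ _ * ‖T x‖
    gcongr
    have := norm_nonneg (LinearMap.toContinuousLinearMap T)
    linarith

theorem sg_convex_min {E : Type*} [NormedAddCommGroup E] [NormedSpace ℝ E] (F : E → ℝ)
    (hF : ConvexOn ℝ Set.univ F) (x : E) (hd : HasFDerivAt F (0 : E →L[ℝ] ℝ) x) (z : E) :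
    F x ≤ F z := by
  have hc : ConvexOn ℝ Set.univ (fun t : ℝ => F (AffineMap.lineMap x z t)) := by
    have := hF.comp_affineMap (AffineMap.lineMap x z : ℝ →ᵃ[ℝ] E)
    rw [Set.preimage_univ] at this
    exact this
  have hl : HasDerivAt (fun t : ℝ => F (AffineMap.lineMap x z t)) 0 0 := by
    have h1 : HasDerivAt (AffineMap.lineMap x z : ℝ → E) (z - x) 0 := AffineMap.hasDerivAt_lineMap
    have h2 : HasFDerivAt F (0 : E →L[ℝ] ℝ) ((AffineMap.lineMap x z : ℝ → E) 0) := by simpa using hd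
    have h3 := h2.comp_hasDerivAt (0 : ℝ) h1
    rw [zero_apply] at h3
    exact h3
  have := hc.le_slope_of_hasDerivAt (Set.mem_univ 0) (Set.mem_univ 1) zero_lt_one hl
  simp [slope_def_field] at this
  linarith

theorem sg_sqrt_le {P Q σ : ℝ} (hσ : 0 ≤ σ) (hQ : 0 ≤ Q) (h : P ≤ σ ^ 2 * Q) :
    Real.sqrt P ≤ σ * Real.sqrt Q := by
  refine (Real.sqrt_le_sqrt h).trans ?_
  rw [Real.sqrt_mul' _ hQ, Real.sqrt_sq hσ]

theorem sg_sqrt_norm {Q : Type*} [Fintype Q] (a : Q → ℝ) :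
    Real.sqrt (∑ j, a j ^ 2) ≤ Real.sqrt (Fintype.card Q) * ‖a‖ := by
  rw [← Real.sqrt_sq (norm_nonneg a), ← Real.sqrt_mul' _ (sq_nonneg _)]
  apply Real.sqrt_le_sqrt
  have : ∀ j ∈ Finset.univ, a j ^ 2 ≤ ‖a‖ ^ 2 := fun j _ => by
    have := norm_le_pi_norm a j
    rw [← sq_abs]
    exact pow_le_pow_left₀ (abs_nonneg _) this 2
  simpa using Finset.sum_le_card_nsmul _ _ _ this

theorem sg_fixed {Q : Type*} [Fintype Q] (m : (Q → ℝ) → Q → ℝ) (μ KM : ℝ) (hμ : 0 < μ)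
    (hKM : 0 < KM)
    (hmono : ∀ x y : Q → ℝ, μ * ∑ j, (x j - y j) ^ 2 ≤ ∑ j, (m x j - m y j) * (x j - y j))
    (hlip : ∀ x y : Q → ℝ, ∑ j, (m x j - m y j) ^ 2 ≤ KM * ∑ j, (x j - y j) ^ 2) :
    ∃ s, ∀ j, m s j = 0 := by
  obtain ⟨t, ht⟩ : ∃ t, t = μ / KM := ⟨_, rfl⟩
  have ht0 : 0 < t := by rw [ht]; positivity
  have htK : t * KM = μ := by rw [ht]; field_simp
  let Φ : EuclideanSpace ℝ Q → EuclideanSpace ℝ Q := fun x =>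
    WithLp.toLp 2 (fun j => x j - t * m x.ofLp j)
  have hl : ContractingWith (Real.toNNReal (Real.sqrt (1 - t * μ))) Φ := by
    refine ⟨?_, ?_⟩
    · rw [← NNReal.coe_lt_coe, Real.coe_toNNReal _ (Real.sqrt_nonneg _), NNReal.coe_one,
        Real.sqrt_lt' one_pos]
      have : 0 < t * μ := by positivity
      linarith
    · refine LipschitzWith.of_dist_le_mul fun x y => ?_
      rw [Real.coe_toNNReal _ (Real.sqrt_nonneg _), EuclideanSpace.dist_eq, EuclideanSpace.dist_eq,
        ← Real.sqrt_mul' _ (Finset.sum_nonneg fun i _ => sq_nonneg _)]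
      apply Real.sqrt_le_sqrt
      simp only [Real.dist_eq, sq_abs, Φ]
      have h1 := hmono x.ofLp y.ofLp
      have h2 := hlip x.ofLp y.ofLp
      have e : ∑ j, (x j - t * m x.ofLp j - (y j - t * m y.ofLp j)) ^ 2 =
          ∑ j, (x j - y j) ^ 2 - 2 * t * ∑ j, (m x.ofLp j - m y.ofLp j) * (x j - y j)
            + t ^ 2 * ∑ j, (m x.ofLp j - m y.ofLp j) ^ 2 := by
        rw [Finset.mul_sum, Finset.mul_sum, ← Finset.sum_sub_distrib, ← Finset.sum_add_distrib]
        exact Finset.sum_congr rfl fun j _ => by ring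
      rw [e]
      have h3 := mul_le_mul_of_nonneg_left h1 (by positivity : 0 ≤ 2 * t)
      have h4 := mul_le_mul_of_nonneg_left h2 (by positivity : 0 ≤ t ^ 2)
      have h5 : t ^ 2 * (KM * ∑ j, (x j - y j) ^ 2) = t * μ * ∑ j, (x j - y j) ^ 2 := by
        rw [← htK]; ring
      linarith
  obtain ⟨x, hx⟩ : ∃ x, Φ x = x := ⟨_, hl.fixedPoint_isFixedPt⟩
  refine ⟨x.ofLp, fun j => ?_⟩
  have h := congrArg (fun z : EuclideanSpace ℝ Q => z j) hx
  have h' : x j - t * m x.ofLp j = x j := h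
  have h'' : t * m x.ofLp j = 0 := by linarith
  exact (mul_eq_zero.1 h'').resolve_left ht0.ne'

theorem sg_step {Q : Type*} [Fintype Q] (m : (Q → ℝ) → Q → ℝ) (μ KM : ℝ) (hμ : 0 < μ)
    (hKM : 0 < KM)
    (hmono : ∀ x y : Q → ℝ, μ * ∑ j, (x j - y j) ^ 2 ≤ ∑ j, (m x j - m y j) * (x j - y j))
    (hlip : ∀ x y : Q → ℝ, ∑ j, (m x j - m y j) ^ 2 ≤ KM * ∑ j, (x j - y j) ^ 2)
    (ss : Q → ℝ) (hss : ∀ j, m ss j = 0) (d : Q → ℝ) (hd : ∀ j, 0 < d j) :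
    ∃ κ α0, 0 < κ ∧ 0 < α0 ∧ ∀ α, 0 < α → α < α0 → ∀ s : Q → ℝ, 0 ≤ 1 - α * κ ∧
      ∑ j, (d j)⁻¹ * (s j - ss j - α * (d j * m s j)) ^ 2 ≤
        (1 - α * κ) ^ 2 * ∑ j, (d j)⁻¹ * (s j - ss j) ^ 2 := by
  obtain ⟨D, hD⟩ : ∃ D, D = ∑ j, d j := ⟨_, rfl⟩
  obtain ⟨D', hD'⟩ : ∃ D', D' = ∑ j, (d j)⁻¹ + 1 := ⟨_, rfl⟩
  have hD0 : 0 ≤ D := by rw [hD]; exact Finset.sum_nonneg fun j _ => (hd j).le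
  have hDi : ∀ j, d j ≤ D := fun j => by
    rw [hD]; exact Finset.single_le_sum (fun j _ => (hd j).le) (Finset.mem_univ j)
  have hDi' : ∀ j, (d j)⁻¹ ≤ D' := fun j => by
    have := Finset.single_le_sum (f := fun j => (d j)⁻¹) (fun j _ => (inv_pos.2 (hd j)).le)
      (Finset.mem_univ j)
    rw [hD']; linarith
  have hD'0 : 0 < D' := by
    have : 0 ≤ ∑ j, (d j)⁻¹ := Finset.sum_nonneg fun j _ => (inv_pos.2 (hd j)).le
    linarith
  obtain ⟨κ, hκ⟩ : ∃ κ, κ = μ / (2 * D') := ⟨_, rfl⟩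
  have hκ0 : 0 < κ := by rw [hκ]; positivity
  have hκm : 2 * κ * D' = μ := by rw [hκ]; field_simp
  refine ⟨κ, min (μ / (D * KM + 1)) (1 / κ), hκ0, by positivity, ?_⟩
  intro α hα hα1 s
  have ha1 : α * (D * KM + 1) ≤ μ := by
    rw [← le_div_iff₀ (by positivity)]; exact (hα1.trans_le (min_le_left _ _)).le
  have ha2 : α * κ ≤ 1 := by
    rw [← le_div_iff₀ hκ0]; exact (hα1.trans_le (min_le_right _ _)).le
  refine ⟨by linarith, ?_⟩
  have e : ∑ j, (d j)⁻¹ * (s j - ss j - α * (d j * m s j)) ^ 2 =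
      ∑ j, (d j)⁻¹ * (s j - ss j) ^ 2 - 2 * α * ∑ j, (m s j - m ss j) * (s j - ss j) +
        α ^ 2 * ∑ j, d j * (m s j - m ss j) ^ 2 := by
    rw [Finset.mul_sum, Finset.mul_sum, ← Finset.sum_sub_distrib, ← Finset.sum_add_distrib]
    refine Finset.sum_congr rfl fun j _ => ?_
    have := (hd j).ne'
    rw [hss]
    field_simp
    ring
  have h1 := hmono s ss
  have h2 := hlip s ss
  have h3 : ∑ j, d j * (m s j - m ss j) ^ 2 ≤ D * ∑ j, (m s j - m ss j) ^ 2 := by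
    rw [Finset.mul_sum]
    exact Finset.sum_le_sum fun j _ => mul_le_mul_of_nonneg_right (hDi j) (sq_nonneg _)
  have h4 : ∑ j, (d j)⁻¹ * (s j - ss j) ^ 2 ≤ D' * ∑ j, (s j - ss j) ^ 2 := by
    rw [Finset.mul_sum]
    exact Finset.sum_le_sum fun j _ => mul_le_mul_of_nonneg_right (hDi' j) (sq_nonneg _)
  have hE0 : 0 ≤ ∑ j, (s j - ss j) ^ 2 := Finset.sum_nonneg fun j _ => sq_nonneg _
  have hP0 : 0 ≤ ∑ j, (d j)⁻¹ * (s j - ss j) ^ 2 :=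
    Finset.sum_nonneg fun j _ => mul_nonneg (inv_pos.2 (hd j)).le (sq_nonneg _)
  rw [e]
  generalize ∑ j, (d j)⁻¹ * (s j - ss j) ^ 2 = P at *
  generalize ∑ j, (s j - ss j) ^ 2 = E at *
  generalize ∑ j, (m s j - m ss j) * (s j - ss j) = I at *
  generalize ∑ j, d j * (m s j - m ss j) ^ 2 = J at *
  generalize ∑ j, (m s j - m ss j) ^ 2 = M at *
  have g1 : J ≤ D * (KM * E) := h3.trans (mul_le_mul_of_nonneg_left h2 hD0)
  have g2 : α ^ 2 * J ≤ α * (μ * E) := by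
    have : α * (D * KM) * E ≤ μ * E := mul_le_mul_of_nonneg_right (by linarith) hE0
    calc α ^ 2 * J ≤ α ^ 2 * (D * (KM * E)) := mul_le_mul_of_nonneg_left g1 (sq_nonneg _)
      _ = α * (α * (D * KM) * E) := by ring
      _ ≤ _ := mul_le_mul_of_nonneg_left this hα.le
  have g3 : 2 * α * (μ * E) ≤ 2 * α * I := mul_le_mul_of_nonneg_left h1 (by positivity)
  have g4 : 2 * κ * P ≤ μ * E := by
    calc 2 * κ * P ≤ 2 * κ * (D' * E) := mul_le_mul_of_nonneg_left h4 (by positivity)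
      _ = (2 * κ * D') * E := by ring
      _ = _ := by rw [hκm]
  have g5 := mul_le_mul_of_nonneg_left g4 hα.le
  have g6 : 0 ≤ (α * κ) ^ 2 * P := by positivity
  nlinarith

theorem sg_bp_same {H : ℕ} {qh : Fin H → ℕ} (x : Clustered H qh → ℝ)
    (h : Fin H) (z : Fin (qh h) → ℝ) (j : Fin (qh h)) : blockPatch x h z ⟨h, j⟩ = z j := by
  simp [blockPatch]

theorem sg_bp_self {H : ℕ} {qh : Fin H → ℕ} (x : Clustered H qh → ℝ) (h : Fin H) :
    blockPatch x h (fun j => x ⟨h, j⟩) = x := by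
  ext ⟨h', j⟩
  by_cases e : h' = h
  · subst e; simp [blockPatch]
  · simp [blockPatch, e]

theorem sg_bp_comb {H : ℕ} {qh : Fin H → ℕ} (x : Clustered H qh → ℝ) (h : Fin H)
    (z z' : Fin (qh h) → ℝ) (a b : ℝ) (hab : a + b = 1) :
    blockPatch x h (a • z + b • z') = a • blockPatch x h z + b • blockPatch x h z' := by
  ext ⟨h', j⟩
  by_cases e : h' = h
  · subst e; simp [blockPatch]
  · simp only [blockPatch, e, dite_false, Pi.add_apply, Pi.smul_apply, smul_eq_mul]
    rw [← add_mul, hab, one_mul]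

theorem sg_bd {H : ℕ} {nh qh : Fin H → ℕ}
    (y : (h : Fin H) → Matrix (Fin (nh h)) (Fin (qh h)) ℝ) (u : Clustered H nh → ℝ)
    (h : Fin H) (j : Fin (qh h)) :
    ∑ i, u i * blockDiag y i ⟨h, j⟩ = ∑ i, u ⟨h, i⟩ * y h i j := by
  rw [Fintype.sum_sigma, Finset.sum_eq_single h]
  · simp [blockDiag]
  · intro h' _ hne
    refine Finset.sum_eq_zero fun i _ => ?_
    simp [blockDiag, hne]
  · simp

theorem sg_grad_sum {H : ℕ} {nh qh : Fin H → ℕ}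
    (f : (h : Fin H) → Fin (nh h) → (Clustered H qh → ℝ) → ℝ)
    (gradf : (h : Fin H) → (i : Fin (nh h)) → (Clustered H qh → ℝ) → Fin (qh h) → ℝ)
    (hgrad : ∀ h i x, HasBlockGradient (f h i) h (gradf h i x) x) (h : Fin H)
    (x : Clustered H qh → ℝ) :
    HasFDerivAt (fun z : Fin (qh h) → ℝ => ∑ i, f h i (blockPatch x h z))
      (∑ j, (∑ i, gradf h i x j) • (ContinuousLinearMap.proj j : (Fin (qh h) → ℝ) →L[ℝ] ℝ))
      (fun j => x ⟨h, j⟩) := by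
  have := HasFDerivAt.fun_sum (u := Finset.univ) (fun i _ => hgrad h i x)
  have e : (∑ j, (∑ i, gradf h i x j) •
      (ContinuousLinearMap.proj j : (Fin (qh h) → ℝ) →L[ℝ] ℝ)) =
      ∑ i, ∑ j, gradf h i x j • (ContinuousLinearMap.proj j : (Fin (qh h) → ℝ) →L[ℝ] ℝ) := by
    rw [Finset.sum_comm]
    exact Finset.sum_congr rfl fun j _ => by rw [Finset.sum_smul]
  rw [e]
  exact this

theorem sg_nash {H : ℕ} {nh qh : Fin H → ℕ}
    (f : (h : Fin H) → Fin (nh h) → (Clustered H qh → ℝ) → ℝ)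
    (gradf : (h : Fin H) → (i : Fin (nh h)) → (Clustered H qh → ℝ) → Fin (qh h) → ℝ)
    (hconv : ∀ h i, ConvexOn ℝ Set.univ (f h i))
    (hgrad : ∀ h i x, HasBlockGradient (f h i) h (gradf h i x) x)
    (x : Clustered H qh → ℝ) (hx : ∀ j : Clustered H qh, ∑ i, gradf j.1 i x j.2 = 0)
    (h : Fin H) (z : Fin (qh h) → ℝ) :
    ∑ i, f h i x ≤ ∑ i, f h i (blockPatch x h z) := by
  have hd := sg_grad_sum f gradf hgrad h x
  have h0 : ∀ j, ∑ i, gradf h i x j = 0 := fun j => hx ⟨h, j⟩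
  simp only [h0, zero_smul, Finset.sum_const_zero] at hd
  have hc : ConvexOn ℝ Set.univ (fun z : Fin (qh h) → ℝ => ∑ i, f h i (blockPatch x h z)) := by
    refine ⟨convex_univ, fun z _ z' _ a b ha hb hab => ?_⟩
    simp only [sg_bp_comb x h z z' a b hab, smul_eq_mul]
    rw [Finset.mul_sum, Finset.mul_sum, ← Finset.sum_add_distrib]
    exact Finset.sum_le_sum fun i _ =>
      (hconv h i).2 (Set.mem_univ _) (Set.mem_univ _) ha hb hab
  have := sg_convex_min _ hc _ hd z
  simpa only [sg_bp_self] using this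

theorem sg_nash' {H : ℕ} {nh qh : Fin H → ℕ}
    (f : (h : Fin H) → Fin (nh h) → (Clustered H qh → ℝ) → ℝ)
    (gradf : (h : Fin H) → (i : Fin (nh h)) → (Clustered H qh → ℝ) → Fin (qh h) → ℝ)
    (hgrad : ∀ h i x, HasBlockGradient (f h i) h (gradf h i x) x)
    (x : Clustered H qh → ℝ)
    (hx : ∀ (h : Fin H) (z : Fin (qh h) → ℝ), ∑ i, f h i x ≤ ∑ i, f h i (blockPatch x h z)) :
    ∀ j : Clustered H qh, ∑ i, gradf j.1 i x j.2 = 0 := by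
  rintro ⟨h, j⟩
  have hd := sg_grad_sum f gradf hgrad h x
  have hm : IsLocalMin (fun z : Fin (qh h) → ℝ => ∑ i, f h i (blockPatch x h z))
      (fun j => x ⟨h, j⟩) := by
    refine Filter.Eventually.of_forall fun z => ?_
    simp only [sg_bp_self]
    exact hx h z
  have h0 := hm.hasFDerivAt_eq_zero hd
  have h1 := congrArg (fun T : (Fin (qh h) → ℝ) →L[ℝ] ℝ => T (Pi.single j 1)) h0
  simpa [sum_apply, Pi.single_apply] using h1

/-- Theorem 1: under the multi-cluster game setup, the game has a
unique Nash equilibrium `x*`; it satisfies `g^h(x*) = 0` for all clusters `h`;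
and there are a step-size `α > 0` and a rate `ρ ∈ (0,1)` such that, along any
trajectory of the gradient-tracking algorithm, every agent's estimate `xᵢ(k)`
converges to `x*` at a linear (geometric) rate: `‖xᵢ(k) − x*‖ ≤ c ρᵏ`. -/
theorem stmt_9 (H : ℕ) (hH : 0 < H) (nh qh : Fin H → ℕ) (hnh : ∀ h, 0 < nh h)
    (f : (h : Fin H) → Fin (nh h) → (Clustered H qh → ℝ) → ℝ)
    (gradf : (h : Fin H) → (i : Fin (nh h)) → (Clustered H qh → ℝ) → Fin (qh h) → ℝ)
    (hconv : ∀ h i, ConvexOn ℝ Set.univ (f h i))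
    (hsmooth : ∀ h i, ContDiff ℝ 1 (f h i))
    (hgrad : ∀ h i x, HasBlockGradient (f h i) h (gradf h i x) x)
    (L : ℝ) (hL : 0 < L)
    (hlip : ∀ h i x y, Real.sqrt (∑ jj, (gradf h i x jj - gradf h i y jj) ^ 2) ≤
      L * Real.sqrt (∑ j, (x j - y j) ^ 2))
    (μ : ℝ) (hμ : 0 < μ)
    (hmono : ∀ x y : Clustered H qh → ℝ,
      μ * ∑ j, (x j - y j) ^ 2 ≤
        ∑ j : Clustered H qh,
          ((∑ i, gradf j.1 i x j.2) - (∑ i, gradf j.1 i y j.2)) * (x j - y j))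
    (R : Matrix (Clustered H nh) (Clustered H nh) ℝ)
    (hRnonneg : ∀ i j, 0 ≤ R i j) (hRrow : ∀ i, ∑ j, R i j = 1)
    (hRdiag : ∀ i, 0 < R i i)
    (hRirr : ∀ i j, ∃ k : ℕ, 1 ≤ k ∧ 0 < (R ^ k) i j)
    (C : (h : Fin H) → Matrix (Fin (nh h)) (Fin (nh h)) ℝ)
    (hCnonneg : ∀ h i j, 0 ≤ C h i j) (hCcol : ∀ h j, ∑ i, C h i j = 1)
    (hCdiag : ∀ h i, 0 < C h i i)
    (hCirr : ∀ h i j, ∃ k : ℕ, 1 ≤ k ∧ 0 < ((C h) ^ k) i j) :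
    ∃ xstar : Clustered H qh → ℝ,
      (∀ (h : Fin H) (z : Fin (qh h) → ℝ),
        ∑ i, f h i xstar ≤ ∑ i, f h i (blockPatch xstar h z)) ∧
      (∀ y : Clustered H qh → ℝ,
        (∀ (h : Fin H) (z : Fin (qh h) → ℝ),
          ∑ i, f h i y ≤ ∑ i, f h i (blockPatch y h z)) → y = xstar) ∧
      (∀ j : Clustered H qh, ∑ i, gradf j.1 i xstar j.2 = 0) ∧
      (∃ α : ℝ, 0 < α ∧ ∃ ρ : ℝ, 0 < ρ ∧ ρ < 1 ∧
        ∀ (xseq : ℕ → Matrix (Clustered H nh) (Clustered H qh) ℝ)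
          (yseq : (h : Fin H) → ℕ → Matrix (Fin (nh h)) (Fin (qh h)) ℝ),
          (∀ h, yseq h 0 = gradMat gradf h (xseq 0)) →
          (∀ k, xseq (k + 1) = R * (xseq k - α • blockDiag (fun h => yseq h k))) →
          (∀ h k, yseq h (k + 1) =
            C h * yseq h k + gradMat gradf h (xseq (k + 1)) - gradMat gradf h (xseq k)) →
          ∃ c : ℝ, 0 < c ∧
            ∀ (i : Clustered H nh) (k : ℕ),
              Real.sqrt (∑ j, (xseq k i j - xstar j) ^ 2) ≤ c * ρ ^ k) := by
  have : Nonempty (Fin H) := ⟨⟨0, hH⟩⟩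
  have : ∀ h, Nonempty (Fin (nh h)) := fun h => ⟨⟨0, hnh h⟩⟩
  have : Nonempty (Clustered H nh) := ⟨⟨⟨0, hH⟩, ⟨0, hnh _⟩⟩⟩
  -- pointwise Lipschitz bound
  have hlip1 : ∀ h i (x y : Clustered H qh → ℝ) jj, |gradf h i x jj - gradf h i y jj| ≤
      L * Real.sqrt (∑ j, (x j - y j) ^ 2) := by
    intro h i x y jj
    refine le_trans ?_ (hlip h i x y)
    apply Real.abs_le_sqrt
    exact Finset.single_le_sum (f := fun jj => (gradf h i x jj - gradf h i y jj) ^ 2)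
      (fun _ _ => sq_nonneg _) (Finset.mem_univ jj)
  let m : (Clustered H qh → ℝ) → Clustered H qh → ℝ := fun x j => ∑ i, gradf j.1 i x j.2
  obtain ⟨KM, hKM, hmlip⟩ : ∃ KM, 0 < KM ∧ ∀ x y : Clustered H qh → ℝ,
      ∑ j, (m x j - m y j) ^ 2 ≤ KM * ∑ j, (x j - y j) ^ 2 := by
    refine ⟨∑ j : Clustered H qh, ((nh j.1 : ℝ) * L) ^ 2 + 1, by positivity, fun x y => ?_⟩
    have hE0 : 0 ≤ ∑ j, (x j - y j) ^ 2 := Finset.sum_nonneg fun j _ => sq_nonneg _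
    have h1 : ∀ j, (m x j - m y j) ^ 2 ≤ ((nh j.1 : ℝ) * L) ^ 2 * ∑ j, (x j - y j) ^ 2 := by
      intro j
      have h2 : |m x j - m y j| ≤ (nh j.1 : ℝ) * (L * Real.sqrt (∑ j, (x j - y j) ^ 2)) := by
        simp only [m]
        rw [← Finset.sum_sub_distrib]
        refine (Finset.abs_sum_le_sum_abs _ _).trans ?_
        refine (Finset.sum_le_card_nsmul _ _ _ fun i _ => hlip1 j.1 i x y j.2).trans ?_
        simp
      rw [← sq_abs]
      refine (pow_le_pow_left₀ (abs_nonneg _) h2 2).trans (le_of_eq ?_)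
      rw [mul_pow, mul_pow, Real.sq_sqrt hE0]
      ring
    refine (Finset.sum_le_sum fun j _ => h1 j).trans ?_
    rw [← Finset.sum_mul]
    gcongr
    linarith
  obtain ⟨ss, hss⟩ := sg_fixed m μ KM hμ hKM hmono hmlip
  refine ⟨ss, sg_nash f gradf hconv hgrad ss hss, ?_, hss, ?_⟩
  · intro y hy
    have h0 := sg_nash' f gradf hgrad y hy
    have h1 := hmono y ss
    have h2 : ∑ j : Clustered H qh,
          ((∑ i, gradf j.1 i y j.2) - (∑ i, gradf j.1 i ss j.2)) * (y j - ss j) = 0 := by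
      refine Finset.sum_eq_zero fun j _ => ?_
      have := hss j
      simp only [m] at this
      rw [h0 j, this]; ring
    rw [h2] at h1
    have h3 : ∑ j, (y j - ss j) ^ 2 = 0 := by
      have : 0 ≤ ∑ j, (y j - ss j) ^ 2 := Finset.sum_nonneg fun j _ => sq_nonneg _
      nlinarith
    ext j
    have h4 := (Finset.sum_eq_zero_iff_of_nonneg (fun j _ => sq_nonneg _)).1 h3 j
      (Finset.mem_univ j)
    exact sub_eq_zero.1 (pow_eq_zero_iff two_ne_zero |>.1 h4)
  -- Perron vectors and contraction factors
  obtain ⟨u, hu, hu1, hui⟩ := sg_perron R hRnonneg hRrow hRirr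
  obtain ⟨σR, hσR0, hσR1, hσR⟩ := sg_contr R hRnonneg hRrow hRdiag
    (sg_conn R hRirr hRnonneg) u hu hui
  choose v hv hv1 hvi σC hσC0 hσC1 hσC using fun h =>
    sg_contrC (C h) (hCnonneg h) (hCcol h) (hCdiag h) (hCirr h)
  obtain ⟨h0, hh0⟩ := Finite.exists_max σC
  obtain ⟨σ, hσdef⟩ : ∃ σ, σ = max σR (σC h0) := ⟨_, rfl⟩
  have hσ0 : 0 ≤ σ := by rw [hσdef]; exact hσR0.trans (le_max_left _ _)
  have hσ1 : σ < 1 := by rw [hσdef]; exact max_lt hσR1 (hσC1 h0)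
  have hσRσ : σR ≤ σ := by rw [hσdef]; exact le_max_left _ _
  have hσCσ : ∀ h, σC h ≤ σ := fun h => by rw [hσdef]; exact (hh0 h).trans (le_max_right _ _)
  let d : Clustered H qh → ℝ := fun j => ∑ i, u ⟨j.1, i⟩ * v j.1 i
  have hd : ∀ j, 0 < d j := fun j =>
    Finset.sum_pos (fun i _ => mul_pos (hu _) (hv _ _)) Finset.univ_nonempty
  obtain ⟨κ, α0, hκ, hα0, hstep⟩ := sg_step m μ KM hμ hKM hmono hmlip ss hss d hd
  -- the linear maps
  let A : (Clustered H nh → Clustered H qh → ℝ) →ₗ[ℝ] (Clustered H nh → Clustered H qh → ℝ) :=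
    { toFun := fun x i j => ∑ l, R i l * x l j
      map_add' := fun x y => by
        ext i j; simp only [Pi.add_apply, mul_add, Finset.sum_add_distrib]
      map_smul' := fun c x => by
        ext i j
        simp only [Pi.smul_apply, smul_eq_mul, RingHom.id_apply, Finset.mul_sum]
        exact Finset.sum_congr rfl fun l _ => by ring }
  let B : ((h : Fin H) → Fin (nh h) → Fin (qh h) → ℝ) →ₗ[ℝ]
      (Clustered H nh → Clustered H qh → ℝ) :=
    { toFun := fun y i j => blockDiag (fun h => Matrix.of (y h)) i j
      map_add' := fun x y => by
        ext i j
        simp only [blockDiag, Matrix.of_apply, Pi.add_apply]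
        split_ifs <;> simp
      map_smul' := fun c x => by
        ext i j
        simp only [blockDiag, Matrix.of_apply, Pi.smul_apply, RingHom.id_apply]
        split_ifs <;> simp }
  let Cm : ((h : Fin H) → Fin (nh h) → Fin (qh h) → ℝ) →ₗ[ℝ]
      ((h : Fin H) → Fin (nh h) → Fin (qh h) → ℝ) :=
    { toFun := fun y h i j => ∑ l, C h i l * y h l j
      map_add' := fun x y => by
        ext h i j; simp only [Pi.add_apply, mul_add, Finset.sum_add_distrib]
      map_smul' := fun c x => by
        ext h i j
        simp only [Pi.smul_apply, smul_eq_mul, RingHom.id_apply, Finset.mul_sum]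
        exact Finset.sum_congr rfl fun l _ => by ring }
  let ub : (Clustered H nh → Clustered H qh → ℝ) →ₗ[ℝ] (Clustered H qh → ℝ) :=
    { toFun := fun x j => ∑ l, u l * x l j
      map_add' := fun x y => by
        ext j; simp only [Pi.add_apply, mul_add, Finset.sum_add_distrib]
      map_smul' := fun c x => by
        ext j
        simp only [Pi.smul_apply, smul_eq_mul, RingHom.id_apply, Finset.mul_sum]
        exact Finset.sum_congr rfl fun l _ => by ring }
  let one : (Clustered H qh → ℝ) →ₗ[ℝ] (Clustered H nh → Clustered H qh → ℝ) :=
    { toFun := fun s _ j => s j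
      map_add' := fun x y => rfl
      map_smul' := fun c x => rfl }
  let sm : ((h : Fin H) → Fin (nh h) → Fin (qh h) → ℝ) →ₗ[ℝ] (Clustered H qh → ℝ) :=
    { toFun := fun y j => ∑ i, y j.1 i j.2
      map_add' := fun x y => by
        ext j; simp only [Pi.add_apply, Finset.sum_add_distrib]
      map_smul' := fun c x => by
        ext j
        simp only [Pi.smul_apply, smul_eq_mul, RingHom.id_apply, Finset.mul_sum] }
  let vm : (Clustered H qh → ℝ) →ₗ[ℝ] ((h : Fin H) → Fin (nh h) → Fin (qh h) → ℝ) :=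
    { toFun := fun s h i j => v h i * s ⟨h, j⟩
      map_add' := fun x y => by
        ext h i j; simp only [Pi.add_apply, mul_add]
      map_smul' := fun c x => by
        ext h i j
        simp only [Pi.smul_apply, smul_eq_mul, RingHom.id_apply]
        ring }
  let G : (Clustered H nh → Clustered H qh → ℝ) → ((h : Fin H) → Fin (nh h) → Fin (qh h) → ℝ) :=
    fun x h i j => gradf h i (x ⟨h, i⟩) j
  have hA : ∀ x i j, A x i j = ∑ l, R i l * x l j := fun _ _ _ => rfl
  have hB : ∀ y i j, B y i j = blockDiag (fun h => Matrix.of (y h)) i j := fun _ _ _ => rfl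
  have hCm : ∀ y h i j, Cm y h i j = ∑ l, C h i l * y h l j := fun _ _ _ _ => rfl
  have hub : ∀ x j, ub x j = ∑ l, u l * x l j := fun _ _ => rfl
  have hone : ∀ s i j, one s i j = s j := fun _ _ _ => rfl
  have hsm : ∀ y j, sm y j = ∑ i, y j.1 i j.2 := fun _ _ => rfl
  have hvm : ∀ s h i j, vm s h i j = v h i * s ⟨h, j⟩ := fun _ _ _ _ => rfl
  have hGd : ∀ x h i j, G x h i j = gradf h i (x ⟨h, i⟩) j := fun _ _ _ _ => rfl
  clear_value A B Cm ub one sm vm G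
  -- the adapted norms
  obtain ⟨na, Ka, hKa, hna, hna1, hna2⟩ := sg_norm
    (X := Clustered H nh → Clustered H qh → ℝ)
    (ι := Clustered H nh × Clustered H qh)
    (fun p => { toFun := fun x => x p.1 p.2, map_add' := fun _ _ => rfl, map_smul' := fun _ _ => rfl }) (fun p => u p.1) (fun p => hu _)
    (fun x hx => by ext i j; exact hx (i, j))
  obtain ⟨nb, Kb, hKb, hnb, hnb1, hnb2⟩ := sg_norm
    (X := (h : Fin H) → Fin (nh h) → Fin (qh h) → ℝ)
    (ι := (h : Fin H) × (Fin (nh h) × Fin (qh h)))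
    (fun p => { toFun := fun x => x p.1 p.2.1 p.2.2, map_add' := fun _ _ => rfl, map_smul' := fun _ _ => rfl })
    (fun p => (v p.1 p.2.1)⁻¹) (fun p => inv_pos.2 (hv _ _))
    (fun x hx => by ext h i j; exact hx ⟨h, i, j⟩)
  obtain ⟨nc, Kc, hKc, hnc, hnc1, hnc2⟩ := sg_norm
    (X := Clustered H qh → ℝ) (ι := Clustered H qh)
    (fun p => { toFun := fun x => x p, map_add' := fun _ _ => rfl, map_smul' := fun _ _ => rfl }) (fun p => (d p)⁻¹) (fun p => inv_pos.2 (hd _))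
    (fun x hx => by ext j; exact hx j)
  simp only [LinearMap.coe_mk, AddHom.coe_mk] at hna hnb hnc
  -- Lipschitz constant of `G`
  have hGlip : ∀ x x', ‖G x - G x'‖ ≤
      (L * Real.sqrt (Fintype.card (Clustered H qh)) + 1) * ‖x - x'‖ := by
    intro x x'
    have h1 : ∀ h i j, ‖(G x - G x') h i j‖ ≤
        (L * Real.sqrt (Fintype.card (Clustered H qh)) + 1) * ‖x - x'‖ := by
      intro h i j
      have e : (G x - G x') h i j = gradf h i (x ⟨h, i⟩) j - gradf h i (x' ⟨h, i⟩) j := by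
        rw [Pi.sub_apply, Pi.sub_apply, Pi.sub_apply, hGd, hGd]
      rw [e, Real.norm_eq_abs]
      refine (hlip1 _ _ _ _ _).trans ?_
      have h2 := sg_sqrt_norm (x ⟨h, i⟩ - x' ⟨h, i⟩)
      simp only [Pi.sub_apply] at h2
      have h3 : ‖x ⟨h, i⟩ - x' ⟨h, i⟩‖ ≤ ‖x - x'‖ := norm_le_pi_norm (x - x') ⟨h, i⟩
      have h4 := norm_nonneg (x - x')
      calc _ ≤ L * (Real.sqrt (Fintype.card (Clustered H qh)) * ‖x - x'‖) := by
            gcongr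
            exact h2.trans (by gcongr)
        _ ≤ _ := by linarith
    have hn : 0 ≤ (L * Real.sqrt (Fintype.card (Clustered H qh)) + 1) * ‖x - x'‖ := by positivity
    refine (pi_norm_le_iff_of_nonneg hn).2 fun h => (pi_norm_le_iff_of_nonneg hn).2 fun i =>
      (pi_norm_le_iff_of_nonneg hn).2 fun j => h1 h i j
  have hubB : ∀ s j, ub (B (vm s)) j = d j * s j := by
    rintro s ⟨h, j⟩
    rw [hub]
    simp only [hB]
    rw [sg_bd]
    simp only [Matrix.of_apply, hvm, d]
    rw [Finset.sum_mul]
    exact Finset.sum_congr rfl fun i _ => by ring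
  have hsmG : ∀ s, sm (G (one s)) = m s := by
    intro s
    ext j
    have hos : ∀ i, one s i = s := fun i => funext fun j => hone s i j
    simp only [hsm, hGd, m, hos]
  obtain ⟨α, hα, ρ, hρ0, hρ1, hconvg⟩ := sg_abstract
    (LinearMap.toContinuousLinearMap A) (LinearMap.toContinuousLinearMap B)
    (LinearMap.toContinuousLinearMap Cm) (LinearMap.toContinuousLinearMap ub)
    (LinearMap.toContinuousLinearMap one) (LinearMap.toContinuousLinearMap sm)
    (LinearMap.toContinuousLinearMap vm) G
    (L * Real.sqrt (Fintype.card (Clustered H qh)) + 1) (by positivity) hGlip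
    (by
      intro x
      ext j
      simp only [LinearMap.coe_toContinuousLinearMap', hub, hA, Finset.mul_sum]
      rw [Finset.sum_comm]
      refine Finset.sum_congr rfl fun l _ => ?_
      have : u l * x l j = (∑ i, u i * R i l) * x l j := by rw [hui l]
      rw [this, Finset.sum_mul]
      exact Finset.sum_congr rfl fun i _ => by ring)
    (by
      intro s
      ext i j
      simp only [LinearMap.coe_toContinuousLinearMap', hone, hA]
      rw [← Finset.sum_mul, hRrow, one_mul])
    (by
      intro s
      ext j
      simp only [LinearMap.coe_toContinuousLinearMap', hone, hub]
      rw [← Finset.sum_mul, hu1, one_mul])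
    (by
      intro y
      ext j
      simp only [LinearMap.coe_toContinuousLinearMap', hsm, hCm]
      rw [Finset.sum_comm]
      refine Finset.sum_congr rfl fun l _ => ?_
      rw [← Finset.sum_mul, hCcol, one_mul])
    (by
      intro s
      ext h i j
      simp only [LinearMap.coe_toContinuousLinearMap', hvm, hCm]
      have : v h i * s ⟨h, j⟩ = (∑ l, C h i l * v h l) * s ⟨h, j⟩ := by rw [hvi h i]
      rw [this, Finset.sum_mul]
      exact Finset.sum_congr rfl fun i _ => by ring)
    (by
      intro s
      ext j
      simp only [LinearMap.coe_toContinuousLinearMap', hvm, hsm]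
      rw [← Finset.sum_mul, hv1, one_mul])
    na nb nc (Ka + Kb + Kc) (by positivity)
    (fun x => (hna1 x).trans (mul_le_mul_of_nonneg_right (by linarith) (norm_nonneg _)))
    (fun x => (hna2 x).trans (mul_le_mul_of_nonneg_right (by linarith) (apply_nonneg _ _)))
    (fun x => (hnb1 x).trans (mul_le_mul_of_nonneg_right (by linarith) (norm_nonneg _)))
    (fun x => (hnb2 x).trans (mul_le_mul_of_nonneg_right (by linarith) (apply_nonneg _ _)))
    (fun x => (hnc1 x).trans (mul_le_mul_of_nonneg_right (by linarith) (norm_nonneg _)))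
    (fun x => (hnc2 x).trans (mul_le_mul_of_nonneg_right (by linarith) (apply_nonneg _ _)))
    σ hσ0 hσ1
    (by
      intro x hx
      simp only [LinearMap.coe_toContinuousLinearMap'] at hx ⊢
      rw [hna, hna]
      refine sg_sqrt_le hσ0
        (Finset.sum_nonneg fun p _ => mul_nonneg (hu _).le (sq_nonneg _)) ?_
      rw [Fintype.sum_prod_type_right, Fintype.sum_prod_type_right, Finset.mul_sum]
      refine Finset.sum_le_sum fun j _ => ?_
      simp only [hA]
      have h1 := hσR (fun i => x i j) (by rw [← hub, hx]; rfl)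
      refine h1.trans (mul_le_mul_of_nonneg_right (pow_le_pow_left₀ hσR0 hσRσ 2) ?_)
      exact Finset.sum_nonneg fun p _ => mul_nonneg (hu _).le (sq_nonneg _))
    (by
      intro y hy
      simp only [LinearMap.coe_toContinuousLinearMap'] at hy ⊢
      rw [hnb, hnb]
      refine sg_sqrt_le hσ0
        (Finset.sum_nonneg fun p _ => mul_nonneg (inv_pos.2 (hv _ _)).le (sq_nonneg _)) ?_
      rw [Fintype.sum_sigma, Fintype.sum_sigma, Finset.mul_sum]
      refine Finset.sum_le_sum fun h _ => ?_
      rw [Fintype.sum_prod_type_right, Fintype.sum_prod_type_right, Finset.mul_sum]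
      refine Finset.sum_le_sum fun j _ => ?_
      simp only [hCm]
      have h1 := hσC h (fun i => y h i j) (by
        have := congrFun hy ⟨h, j⟩
        rw [hsm] at this
        exact this)
      refine h1.trans (mul_le_mul_of_nonneg_right (pow_le_pow_left₀ (hσC0 h) (hσCσ h) 2) ?_)
      exact Finset.sum_nonneg fun p _ => mul_nonneg (inv_pos.2 (hv _ _)).le (sq_nonneg _))
    ss
    (by
      simp only [LinearMap.coe_toContinuousLinearMap', hsmG]
      ext j
      exact hss j)
    κ α0 hκ hα0
    (by
      intro α hα hα1 s
      obtain ⟨h1, h2⟩ := hstep α hα hα1 s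
      simp only [LinearMap.coe_toContinuousLinearMap']
      rw [hnc, hnc]
      refine sg_sqrt_le h1
        (Finset.sum_nonneg fun p _ => mul_nonneg (inv_pos.2 (hd _)).le (sq_nonneg _)) ?_
      simp only [Pi.sub_apply, Pi.smul_apply, smul_eq_mul, hubB, hsmG]
      exact h2)
  simp only [LinearMap.coe_toContinuousLinearMap'] at hconvg
  refine ⟨α, hα, ρ, hρ0, hρ1, ?_⟩
  intro xseq yseq hy0 hxs hys
  obtain ⟨c, hc, hck⟩ := hconvg (fun k i j => xseq k i j) (fun k h i j => yseq h k i j)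
    (by
      ext h i j
      rw [hGd, hy0]
      rfl)
    (by
      intro k
      ext i j
      rw [hA, hxs, Matrix.mul_apply]
      refine Finset.sum_congr rfl fun l _ => ?_
      simp only [Pi.sub_apply, Pi.smul_apply, hB]
      rfl)
    (by
      intro k
      ext h i j
      simp only [Pi.sub_apply, Pi.add_apply, hCm, hGd]
      rw [hys, Matrix.sub_apply, Matrix.add_apply, Matrix.mul_apply]
      rfl)
  refine ⟨Real.sqrt (Fintype.card (Clustered H qh)) * c + 1, by positivity, fun i k => ?_⟩
  have h1 := sg_sqrt_norm (fun j => xseq k i j - ss j)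
  have h2 : ‖(fun j => xseq k i j - ss j)‖ ≤ c * ρ ^ k := by
    refine le_trans ?_ (hck k)
    have h3 := norm_le_pi_norm ((fun i j => xseq k i j) - one ss) i
    refine le_trans (le_of_eq ?_) h3
    congr 1
    ext j
    rw [Pi.sub_apply, Pi.sub_apply, hone]
  refine h1.trans ((mul_le_mul_of_nonneg_left h2 (Real.sqrt_nonneg _)).trans ?_)
  have := pow_pos hρ0 k
  nlinarith
end
end

section
/- Under the multi-cluster game setup, for every α ≥ 0 and every matrix x ∈ ℝ^{n×q} with rows x_i^T (ordered by cluster), setting x̄ = u^T x ∈ ℝ^{1×q}, ḡ^h = (1/n_h) Σ_{i=1}^{n_h} (∇_{x^h} f_i^h(x̄))^T, ȳ^h = (1/n_h) Σ_{i=1}^{n_h} (∇_{x^h} f_i^h(x_i))^T, Λ_ḡ = blockdiag{v^1 ḡ^1, …, v^H ḡ^H} and Λ_y = blockdiag{v^1 ȳ^1, …, v^H ȳ^H}, one has: ‖α 1 u^T (Λ_ḡ − Λ_y)‖_F ≤ α · δ_{F,u} · L_v · ‖1 u^T‖₂ · ‖x − 1 x̄‖_F^u, where δ_{F,u} = max_i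 u_i^{-1/2}. -/
noncomputable section

/-- `n ‖u‖² ≤ ‖1 uᵀ‖₂²`. -/
theorem aux_specNorm {N : Type*} [Fintype N] [DecidableEq N] [Nonempty N] (u : N → ℝ)
    (hu : ∀ i, 0 < u i) :
    (Fintype.card N : ℝ) * ∑ i, u i ^ 2 ≤ specNorm (rowRep N u) ^ 2 := by
  have hU : 0 < ∑ i, u i ^ 2 :=
    Finset.sum_pos (fun i _ => pow_pos (hu i) 2) Finset.univ_nonempty
  have h := (LinearMap.toContinuousLinearMap (Matrix.toEuclideanLin (rowRep N u))).le_opNorm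
    (WithLp.toLp 2 u)
  change _ ≤ specNorm (rowRep N u) * _ at h
  have h2 := pow_le_pow_left₀ (norm_nonneg _) h 2
  rw [mul_pow, EuclideanSpace.real_norm_sq_eq, EuclideanSpace.real_norm_sq_eq] at h2
  have h3 : ∀ i, (LinearMap.toContinuousLinearMap (Matrix.toEuclideanLin (rowRep N u))
    (WithLp.toLp 2 u)) i = ∑ i, u i ^ 2 := by
    intro i
    simp [Matrix.toLpLin_apply, Matrix.mulVec, dotProduct, rowRep, pow_two]
  simp only [h3] at h2
  simp only [Finset.sum_const, nsmul_eq_mul, Finset.card_univ] at h2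
  refine le_of_mul_le_mul_right ?_ hU
  calc _ = (Fintype.card N : ℝ) * (∑ i, u i ^ 2) ^ 2 := by ring
    _ ≤ _ := h2

/-- Bound for a single cluster. -/
theorem aux_cluster {n q : ℕ} (hn : 0 < n) (w v : Fin n → ℝ) (hv : ∀ i, 0 < v i)
    (M : ℝ) (hM : ∀ i, v i ≤ M) (d : Fin n → Fin q → ℝ) (L : ℝ) (e : Fin n → ℝ)
    (hd : ∀ i, ∑ k, d i k ^ 2 ≤ L ^ 2 * e i) :
    ∑ k, ((∑ i, w i * v i) * ((n : ℝ)⁻¹ * ∑ i, d i k)) ^ 2 ≤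
      M ^ 2 * (∑ i, w i ^ 2) * L ^ 2 * ∑ i, e i := by
  have hn' : (0 : ℝ) < n := by exact_mod_cast hn
  have hc : (∑ i, w i * v i) ^ 2 ≤ (∑ i, w i ^ 2) * (n * M ^ 2) := by
    refine (Finset.sum_mul_sq_le_sq_mul_sq _ _ _).trans ?_
    refine mul_le_mul_of_nonneg_left ?_ (Finset.sum_nonneg fun i _ => sq_nonneg _)
    calc ∑ i, v i ^ 2 ≤ ∑ i : Fin n, M ^ 2 :=
          Finset.sum_le_sum fun i _ => pow_le_pow_left₀ (hv i).le (hM i) 2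
      _ = _ := by simp
  have hD : ∑ k, ((n : ℝ)⁻¹ * ∑ i, d i k) ^ 2 ≤ (n : ℝ)⁻¹ * (L ^ 2 * ∑ i, e i) := by
    calc ∑ k, ((n : ℝ)⁻¹ * ∑ i, d i k) ^ 2 ≤ ∑ k, (n : ℝ)⁻¹ * ∑ i, d i k ^ 2 := by
          refine Finset.sum_le_sum fun k _ => ?_
          have h := sq_sum_le_card_mul_sum_sq (s := Finset.univ) (f := fun i => d i k)
          simp only [Finset.card_univ, Fintype.card_fin] at h
          rw [mul_pow]
          calc _ ≤ ((n : ℝ)⁻¹) ^ 2 * (n * ∑ i, d i k ^ 2) := by gcongr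
            _ = _ := by field_simp
      _ = (n : ℝ)⁻¹ * ∑ i, ∑ k, d i k ^ 2 := by
          rw [← Finset.mul_sum, Finset.sum_comm]
      _ ≤ (n : ℝ)⁻¹ * ∑ i, L ^ 2 * e i := by
          gcongr with i
          exact hd i
      _ = _ := by rw [← Finset.mul_sum]
  simp only [mul_pow (∑ i, w i * v i)]
  rw [← Finset.mul_sum]
  calc _ ≤ ((∑ i, w i ^ 2) * (n * M ^ 2)) * ((n : ℝ)⁻¹ * (L ^ 2 * ∑ i, e i)) :=
        mul_le_mul hc hD (Finset.sum_nonneg fun i _ => sq_nonneg _)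
          (mul_nonneg (Finset.sum_nonneg fun i _ => sq_nonneg _) (by positivity))
    _ = _ := by field_simp

/-- Lemma 4, part 2.  Under the multi-cluster game setup, with
`x̄ = uᵀ x`, `Λ_ḡ = blockdiag{v^h ḡ^h}` (gradients at the average `x̄`) and
`Λ_y = blockdiag{v^h ȳ^h}` (averaged gradients at the individual rows `xᵢ`):
`‖α 1 uᵀ (Λ_ḡ − Λ_y)‖_F ≤ α δ_{F,u} L_v ‖1 uᵀ‖₂ ‖x − 1 x̄‖_F^u`,
where `δ_{F,u} = maxᵢ uᵢ^{-1/2}` and `L_v = L·max_{i,h} v^h_i`. -/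
theorem stmt_11 (H : ℕ) (hH : 0 < H) (nh qh : Fin H → ℕ) (hnh : ∀ h, 0 < nh h)
    (f : (h : Fin H) → Fin (nh h) → (Clustered H qh → ℝ) → ℝ)
    (gradf : (h : Fin H) → (i : Fin (nh h)) → (Clustered H qh → ℝ) → Fin (qh h) → ℝ)
    (hconv : ∀ h i, ConvexOn ℝ Set.univ (f h i))
    (hsmooth : ∀ h i, ContDiff ℝ 1 (f h i))
    (hgrad : ∀ h i x, HasBlockGradient (f h i) h (gradf h i x) x)
    (L : ℝ) (hL : 0 < L)
    (hlip : ∀ h i x y, Real.sqrt (∑ jj, (gradf h i x jj - gradf h i y jj) ^ 2) ≤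
      L * Real.sqrt (∑ j, (x j - y j) ^ 2))
    (u : Clustered H nh → ℝ) (hu : ∀ i, 0 < u i) (husum : ∑ i, u i = 1)
    (v : (h : Fin H) → Fin (nh h) → ℝ) (hv : ∀ h i, 0 < v h i)
    (hvsum : ∀ h, ∑ i, v h i = 1)
    (α : ℝ) (hα : 0 ≤ α)
    (x : Matrix (Clustered H nh) (Clustered H qh) ℝ) :
    frobNorm (α • (rowRep (Clustered H nh) u *
        (Matrix.of (fun (i : Clustered H nh) (j : Clustered H qh) =>
            if i.1 = j.1 then
              v i.1 i.2 * ((nh j.1 : ℝ)⁻¹ * ∑ i', gradf j.1 i' (Matrix.vecMul u x) j.2)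
            else 0)
          - Matrix.of (fun (i : Clustered H nh) (j : Clustered H qh) =>
            if i.1 = j.1 then
              v i.1 i.2 * ((nh j.1 : ℝ)⁻¹ * ∑ i', gradf j.1 i' (x ⟨j.1, i'⟩) j.2)
            else 0)))) ≤
      α *
        (Finset.univ.sup'
          (Finset.univ_nonempty_iff.mpr ⟨⟨⟨0, hH⟩, ⟨0, hnh ⟨0, hH⟩⟩⟩⟩)
          (fun i : Clustered H nh => (Real.sqrt (u i))⁻¹)) *
        (L * Finset.univ.sup'
          (Finset.univ_nonempty_iff.mpr ⟨⟨⟨0, hH⟩, ⟨0, hnh ⟨0, hH⟩⟩⟩⟩)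
          (fun p : Clustered H nh => v p.1 p.2)) *
        specNorm (rowRep (Clustered H nh) u) *
        frobNormW u (x - rowRep (Clustered H nh) (Matrix.vecMul u x)) := by
  have hne : Nonempty (Clustered H nh) := ⟨⟨⟨0, hH⟩, ⟨0, hnh ⟨0, hH⟩⟩⟩⟩
  set δ := Finset.univ.sup'
          (Finset.univ_nonempty_iff.mpr ⟨⟨⟨0, hH⟩, ⟨0, hnh ⟨0, hH⟩⟩⟩⟩)
          (fun i : Clustered H nh => (Real.sqrt (u i))⁻¹) with hδ
  set M := Finset.univ.sup'
          (Finset.univ_nonempty_iff.mpr ⟨⟨⟨0, hH⟩, ⟨0, hnh ⟨0, hH⟩⟩⟩⟩)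
          (fun p : Clustered H nh => v p.1 p.2) with hMdef
  have hM : ∀ h i, v h i ≤ M := fun h i =>
    Finset.le_sup' (fun p : Clustered H nh => v p.1 p.2) (Finset.mem_univ ⟨h, i⟩)
  have hδi : ∀ i, (Real.sqrt (u i))⁻¹ ≤ δ := fun i =>
    Finset.le_sup' (fun i : Clustered H nh => (Real.sqrt (u i))⁻¹) (Finset.mem_univ i)
  have hM0 : 0 ≤ M := (hv _ _).le.trans (hM ⟨0, hH⟩ ⟨0, hnh ⟨0, hH⟩⟩)
  have hδ0 : 0 ≤ δ := le_trans (by positivity) (hδi hne.some)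
  clear_value δ M
  have hspec := aux_specNorm u hu
  have hs0 : 0 ≤ specNorm (rowRep (Clustered H nh) u) := norm_nonneg _
  set s := specNorm (rowRep (Clustered H nh) u) with hs
  clear_value s
  set xb := Matrix.vecMul u x with hxb
  clear_value xb
  set e : Clustered H nh → ℝ := fun p => ∑ j, (x p j - xb j) ^ 2 with he
  have he0 : ∀ p, 0 ≤ e p := fun p => Finset.sum_nonneg fun j _ => sq_nonneg _
  have hd : ∀ h i, ∑ k, (gradf h i xb k - gradf h i (x ⟨h, i⟩) k) ^ 2 ≤ L ^ 2 * e ⟨h, i⟩ := by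
    intro h i
    have h1 := pow_le_pow_left₀ (Real.sqrt_nonneg _) (hlip h i xb (x ⟨h, i⟩)) 2
    rw [mul_pow, Real.sq_sqrt (Finset.sum_nonneg fun j _ => sq_nonneg _),
      Real.sq_sqrt (Finset.sum_nonneg fun j _ => sq_nonneg _)] at h1
    refine h1.trans (le_of_eq ?_)
    congr 1
    exact Finset.sum_congr rfl fun j _ => by ring
  have hW : frobNormW u (x - rowRep (Clustered H nh) xb) ^ 2 = ∑ p, u p * e p := by
    unfold frobNormW frobNorm
    refine (Real.sq_sqrt (by positivity)).trans ?_
    refine Finset.sum_congr rfl fun p _ => ?_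
    rw [he, Finset.mul_sum]
    refine Finset.sum_congr rfl fun j _ => ?_
    rw [Matrix.diagonal_mul, mul_pow, Real.sq_sqrt (hu p).le]
    simp [rowRep]
  have hW0 : 0 ≤ frobNormW u (x - rowRep (Clustered H nh) xb) := Real.sqrt_nonneg _
  set W := frobNormW u (x - rowRep (Clustered H nh) xb)
  clear_value W
  have heW : ∑ p, e p ≤ δ ^ 2 * W ^ 2 := by
    rw [hW, Finset.mul_sum]
    refine Finset.sum_le_sum fun p _ => ?_
    have h1 := pow_le_pow_left₀ (by positivity) (hδi p) 2
    rw [inv_pow, Real.sq_sqrt (hu p).le] at h1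
    have h2 : 1 ≤ δ ^ 2 * u p := by
      calc (1 : ℝ) = (u p)⁻¹ * u p := (inv_mul_cancel₀ (hu p).ne').symm
        _ ≤ _ := mul_le_mul_of_nonneg_right h1 (hu p).le
    nlinarith [he0 p]
  set U := ∑ i, u i ^ 2 with hU
  have hUh : ∀ h, ∑ i, u ⟨h, i⟩ ^ 2 ≤ U := by
    intro h
    rw [hU, Fintype.sum_sigma]
    exact Finset.single_le_sum (f := fun h => ∑ i, u ⟨h, i⟩ ^ 2)
      (fun h _ => Finset.sum_nonneg fun i _ => sq_nonneg _) (Finset.mem_univ h)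
  have hcl : ∀ h, ∑ k, ((∑ i, u ⟨h, i⟩ * v h i) *
      ((nh h : ℝ)⁻¹ * ∑ i, (gradf h i xb k - gradf h i (x ⟨h, i⟩) k))) ^ 2 ≤
      M ^ 2 * U * L ^ 2 * ∑ i, e ⟨h, i⟩ := by
    intro h
    refine (aux_cluster (hnh h) (fun i => u ⟨h, i⟩) (v h) (hv h) M (hM h) _ L
      (fun i => e ⟨h, i⟩) (hd h)).trans ?_
    have := Finset.sum_nonneg (s := Finset.univ) fun (i : Fin (nh h)) _ => he0 ⟨h, i⟩
    have := hUh h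
    gcongr
  have hentry : ∀ (i : Clustered H nh) (j : Clustered H qh), (α • (rowRep (Clustered H nh) u *
        (Matrix.of (fun (i : Clustered H nh) (j : Clustered H qh) =>
            if i.1 = j.1 then
              v i.1 i.2 * ((nh j.1 : ℝ)⁻¹ * ∑ i', gradf j.1 i' xb j.2)
            else 0)
          - Matrix.of (fun (i : Clustered H nh) (j : Clustered H qh) =>
            if i.1 = j.1 then
              v i.1 i.2 * ((nh j.1 : ℝ)⁻¹ * ∑ i', gradf j.1 i' (x ⟨j.1, i'⟩) j.2)
            else 0)))) i j = α * ((∑ i, u ⟨j.1, i⟩ * v j.1 i) *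
      ((nh j.1 : ℝ)⁻¹ * ∑ i, (gradf j.1 i xb j.2 - gradf j.1 i (x ⟨j.1, i⟩) j.2))) := by
    intro i j
    rw [Matrix.smul_apply, smul_eq_mul, Matrix.mul_apply, Fintype.sum_sigma,
      Finset.sum_eq_single j.1]
    · congr 1
      rw [Finset.sum_mul]
      refine Finset.sum_congr rfl fun k _ => ?_
      simp only [rowRep, Matrix.of_apply, Matrix.sub_apply, if_true, Finset.sum_sub_distrib]
      ring
    · intro b _ hb
      simp [hb]
    · simp
  unfold frobNorm
  refine Real.sqrt_le_iff.mpr ⟨by positivity, ?_⟩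
  simp only [hentry]
  rw [Finset.sum_const, Finset.card_univ, nsmul_eq_mul]
  simp only [mul_pow α]
  rw [← Finset.mul_sum, Fintype.sum_sigma]
  have hE : ∑ p, e p = ∑ h, ∑ i, e ⟨h, i⟩ := Fintype.sum_sigma _
  have hU0 : 0 ≤ U := Finset.sum_nonneg fun i _ => sq_nonneg _
  calc _ ≤ (Fintype.card (Clustered H nh) : ℝ) * (α ^ 2 *
        ∑ h, M ^ 2 * U * L ^ 2 * ∑ i, e ⟨h, i⟩) := by
        gcongr with h
        exact hcl h
    _ = (Fintype.card (Clustered H nh) * U) * (α ^ 2 * (M ^ 2 * L ^ 2) * ∑ p, e p) := by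
        rw [← Finset.mul_sum, hE]; ring
    _ ≤ s ^ 2 * (α ^ 2 * (M ^ 2 * L ^ 2) * (δ ^ 2 * W ^ 2)) := by
        have := Finset.sum_nonneg (s := Finset.univ) fun p _ => he0 p
        gcongr
    _ = _ := by ring
end
end

section
/- Under the multi-cluster game setup, let x ∈ ℝ^{n×q} have rows x_i^T (ordered by cluster), set x̄ = u^T x ∈ ℝ^{1×q}, and for each h let y^h ∈ ℝ^{n_h×q_h} satisfy (1/n_h) 1^T y^h = ȳ^h = (1/n_h) Σ_{i=1}^{n_h} (∇_{x^h} f_i^h(x_i))^T. With Y = blockdiag{y^1, …, y^H} ∈ ℝ^{n×q}, one has: ‖Y‖_F ≤ Σ_{h=1}^H ‖y^h − v^h ȳ^h‖_F + √H · δ_{F,u} · L_v · ‖x − 1 x̄‖_F^u + √H · L_v · ‖1 x̄ − 1 x*‖_F, where δ_{F,u} = max_i u_i^{-1/2}. -/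
noncomputable section

theorem frobNorm_add_le' {m q : Type*} [Fintype m] [Fintype q] (A B : Matrix m q ℝ) :
    frobNorm (A + B) ≤ frobNorm A + frobNorm B := by
  have key : ∀ C : Matrix m q ℝ,
      frobNorm C = ‖(WithLp.toLp 2 (fun p : m × q => C p.1 p.2) : EuclideanSpace ℝ (m × q))‖ := by
    intro C
    rw [EuclideanSpace.norm_eq, frobNorm, Fintype.sum_prod_type]
    simp
  rw [key, key, key]
  exact norm_add_le (WithLp.toLp 2 (fun p : m × q => A p.1 p.2) : EuclideanSpace ℝ (m × q))
    (WithLp.toLp 2 (fun p : m × q => B p.1 p.2))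

theorem frobNorm_nonneg' {m q : Type*} [Fintype m] [Fintype q] (A : Matrix m q ℝ) :
    0 ≤ frobNorm A := Real.sqrt_nonneg _

theorem frobNorm_sq' {m q : Type*} [Fintype m] [Fintype q] (A : Matrix m q ℝ) :
    frobNorm A ^ 2 = ∑ i, ∑ j, (A i j) ^ 2 :=
  Real.sq_sqrt (Finset.sum_nonneg fun _ _ => Finset.sum_nonneg fun _ _ => sq_nonneg _)

/-- block diagonal matrix -/
def blk {H : ℕ} {nh qh : Fin H → ℕ}
    (y : (h : Fin H) → Matrix (Fin (nh h)) (Fin (qh h)) ℝ) :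
    Matrix (Clustered H nh) (Clustered H qh) ℝ :=
  Matrix.of (fun (i : Clustered H nh) (j : Clustered H qh) =>
        if hij : i.1 = j.1 then y i.1 i.2 (hij.symm ▸ j.2) else 0)

theorem blk_sq {H : ℕ} {nh qh : Fin H → ℕ}
    (y : (h : Fin H) → Matrix (Fin (nh h)) (Fin (qh h)) ℝ) :
    frobNorm (blk y) ^ 2 = ∑ h, frobNorm (y h) ^ 2 := by
  rw [frobNorm_sq', Fintype.sum_sigma]
  refine Finset.sum_congr rfl fun h _ => ?_
  rw [frobNorm_sq']
  refine Finset.sum_congr rfl fun i _ => ?_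
  rw [Fintype.sum_sigma, Finset.sum_eq_single h]
  · simp [blk]
  · intro b _ hb
    simp [blk, hb.symm]
  · simp

theorem blk_add {H : ℕ} {nh qh : Fin H → ℕ}
    (y z : (h : Fin H) → Matrix (Fin (nh h)) (Fin (qh h)) ℝ) :
    blk (fun h => y h + z h) = blk y + blk z := by
  ext i j
  simp only [blk, Matrix.of_apply, Matrix.add_apply]
  split_ifs <;> simp

theorem blk_le_sum {H : ℕ} {nh qh : Fin H → ℕ}
    (y : (h : Fin H) → Matrix (Fin (nh h)) (Fin (qh h)) ℝ) :
    frobNorm (blk y) ≤ ∑ h, frobNorm (y h) := by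
  refine (sq_le_sq₀ (frobNorm_nonneg' _)
    (Finset.sum_nonneg fun h _ => frobNorm_nonneg' _)).1 ?_
  rw [blk_sq]
  rw [sq, Finset.sum_mul]
  refine Finset.sum_le_sum fun h hh => ?_
  rw [sq]
  exact mul_le_mul_of_nonneg_left
    (Finset.single_le_sum (f := fun h => frobNorm (y h)) (fun h _ => frobNorm_nonneg' _) hh)
    (frobNorm_nonneg' _)

theorem frobNorm_le_weighted {n q : Type*} [Fintype n] [Fintype q] [DecidableEq n]
    (u : n → ℝ) (hu : ∀ i, 0 < u i) (d : ℝ) (hd0 : 0 ≤ d) (hd : ∀ i, (Real.sqrt (u i))⁻¹ ≤ d)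
    (A : Matrix n q ℝ) : frobNorm A ≤ d * frobNormW u A := by
  refine (sq_le_sq₀ (frobNorm_nonneg' _) (mul_nonneg hd0 (frobNorm_nonneg' _))).1 ?_
  rw [mul_pow, frobNorm_sq', frobNorm_sq', Finset.mul_sum]
  refine Finset.sum_le_sum fun i _ => ?_
  rw [Finset.mul_sum]
  refine Finset.sum_le_sum fun j _ => ?_
  rw [Matrix.diagonal_mul, mul_pow, ← mul_assoc, ← mul_pow]
  have h0 : 0 < Real.sqrt (u i) := Real.sqrt_pos.2 (hu i)
  have h1 : 1 ≤ d * Real.sqrt (u i) := by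
    have := mul_le_mul_of_nonneg_right (hd i) h0.le
    rwa [inv_mul_cancel₀ h0.ne'] at this
  exact le_mul_of_one_le_left (sq_nonneg _) (one_le_pow₀ h1)

theorem cluster_bound {N q : ℕ} (hN : 0 < N) {Q : Type*} [Fintype Q]
    (g : Fin N → (Q → ℝ) → Fin q → ℝ) (L : ℝ) (hL : 0 < L)
    (hlip : ∀ i x y, Real.sqrt (∑ jj, (g i x jj - g i y jj) ^ 2) ≤
      L * Real.sqrt (∑ j, (x j - y j) ^ 2))
    (xs : Q → ℝ) (hs : ∀ jj, ∑ i, g i xs jj = 0)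
    (v : Fin N → ℝ) (hv : ∀ i, 0 < v i) (M : ℝ) (hM : ∀ i, v i ≤ M)
    (x : Fin N → Q → ℝ) (yb : Fin q → ℝ)
    (hyb : ∀ jj, yb jj = (N : ℝ)⁻¹ * ∑ i, g i (x i) jj) :
    ∑ i, ∑ jj, (v i * yb jj) ^ 2 ≤ (L * M) ^ 2 * ∑ i, ∑ j, (x i j - xs j) ^ 2 := by
  have hN' : (0 : ℝ) < N := by exact_mod_cast hN
  have hlip2 : ∀ i, ∑ jj, (g i (x i) jj - g i xs jj) ^ 2 ≤ L ^ 2 * ∑ j, (x i j - xs j) ^ 2 := by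
    intro i
    have h := pow_le_pow_left₀ (Real.sqrt_nonneg _) (hlip i (x i) xs) 2
    rwa [mul_pow, Real.sq_sqrt (Finset.sum_nonneg fun _ _ => sq_nonneg _),
      Real.sq_sqrt (Finset.sum_nonneg fun _ _ => sq_nonneg _)] at h
  have hy : ∀ jj, N * (yb jj) ^ 2 ≤ ∑ i, (g i (x i) jj - g i xs jj) ^ 2 := by
    intro jj
    have h1 : (N : ℝ) * yb jj = ∑ i, (g i (x i) jj - g i xs jj) := by
      rw [Finset.sum_sub_distrib, hs, hyb]
      field_simp
      ring
    have h2 := sq_sum_le_card_mul_sum_sq (s := Finset.univ)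
      (f := fun i => g i (x i) jj - g i xs jj)
    rw [← h1, Finset.card_univ, Fintype.card_fin] at h2
    refine le_of_mul_le_mul_left ?_ hN'
    calc _ = ((N : ℝ) * yb jj) ^ 2 := by ring
      _ ≤ _ := h2
  have hy2 : N * ∑ jj, (yb jj) ^ 2 ≤ L ^ 2 * ∑ i, ∑ j, (x i j - xs j) ^ 2 := by
    rw [Finset.mul_sum, Finset.mul_sum]
    calc _ ≤ ∑ jj, ∑ i, (g i (x i) jj - g i xs jj) ^ 2 := Finset.sum_le_sum fun jj _ => hy jj
      _ = ∑ i, ∑ jj, (g i (x i) jj - g i xs jj) ^ 2 := Finset.sum_comm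
      _ ≤ _ := Finset.sum_le_sum fun i _ => hlip2 i
  calc ∑ i, ∑ jj, (v i * yb jj) ^ 2 ≤ ∑ i : Fin N, M ^ 2 * ∑ jj, (yb jj) ^ 2 := by
        refine Finset.sum_le_sum fun i _ => ?_
        rw [Finset.mul_sum]
        refine Finset.sum_le_sum fun jj _ => ?_
        rw [mul_pow]
        exact mul_le_mul_of_nonneg_right (pow_le_pow_left₀ (hv i).le (hM i) 2) (sq_nonneg _)
    _ = M ^ 2 * (N * ∑ jj, (yb jj) ^ 2) := by
        rw [Finset.sum_const, Finset.card_univ, Fintype.card_fin, nsmul_eq_mul]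
        ring
    _ ≤ M ^ 2 * (L ^ 2 * ∑ i, ∑ j, (x i j - xs j) ^ 2) :=
        mul_le_mul_of_nonneg_left hy2 (sq_nonneg _)
    _ = _ := by ring

/-- Lemma 4, part 4.  Under the multi-cluster game setup, if the
column averages of `y^h` equal the averaged gradients of cluster `h` at the
rows of `x`, then for `Y = blockdiag{y^1, …, y^H}`:
`‖Y‖_F ≤ ∑ₕ ‖y^h − v^h ȳ^h‖_F + √H δ_{F,u} L_v ‖x − 1 x̄‖_F^u + √H L_v ‖1 x̄ − 1 x*‖_F`,
where `x̄ = uᵀ x`, `δ_{F,u} = maxᵢ uᵢ^{-1/2}` and `L_v = L·max_{i,h} v^h_i`. -/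
theorem stmt_13 (H : ℕ) (hH : 0 < H) (nh qh : Fin H → ℕ) (hnh : ∀ h, 0 < nh h)
    (f : (h : Fin H) → Fin (nh h) → (Clustered H qh → ℝ) → ℝ)
    (gradf : (h : Fin H) → (i : Fin (nh h)) → (Clustered H qh → ℝ) → Fin (qh h) → ℝ)
    (hconv : ∀ h i, ConvexOn ℝ Set.univ (f h i))
    (hsmooth : ∀ h i, ContDiff ℝ 1 (f h i))
    (hgrad : ∀ h i x, HasBlockGradient (f h i) h (gradf h i x) x)
    (L : ℝ) (hL : 0 < L)
    (hlip : ∀ h i x y, Real.sqrt (∑ jj, (gradf h i x jj - gradf h i y jj) ^ 2) ≤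
      L * Real.sqrt (∑ j, (x j - y j) ^ 2))
    (xstar : Clustered H qh → ℝ)
    (hstar : ∀ j : Clustered H qh, ∑ i, gradf j.1 i xstar j.2 = 0)
    (u : Clustered H nh → ℝ) (hu : ∀ i, 0 < u i) (husum : ∑ i, u i = 1)
    (v : (h : Fin H) → Fin (nh h) → ℝ) (hv : ∀ h i, 0 < v h i)
    (hvsum : ∀ h, ∑ i, v h i = 1)
    (x : Matrix (Clustered H nh) (Clustered H qh) ℝ)
    (y : (h : Fin H) → Matrix (Fin (nh h)) (Fin (qh h)) ℝ)
    (hybar : ∀ (h : Fin H) (jj : Fin (qh h)),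
      (nh h : ℝ)⁻¹ * ∑ i, y h i jj = (nh h : ℝ)⁻¹ * ∑ i, gradf h i (x ⟨h, i⟩) jj) :
    frobNorm (Matrix.of (fun (i : Clustered H nh) (j : Clustered H qh) =>
        if hij : i.1 = j.1 then y i.1 i.2 (hij.symm ▸ j.2) else 0)) ≤
      (∑ h, frobNorm (y h -
        Matrix.of (fun i jj => v h i * ((nh h : ℝ)⁻¹ * ∑ i', y h i' jj)))) +
      Real.sqrt H *
        (Finset.univ.sup'
          (Finset.univ_nonempty_iff.mpr ⟨⟨⟨0, hH⟩, ⟨0, hnh ⟨0, hH⟩⟩⟩⟩)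
          (fun i : Clustered H nh => (Real.sqrt (u i))⁻¹)) *
        (L * Finset.univ.sup'
          (Finset.univ_nonempty_iff.mpr ⟨⟨⟨0, hH⟩, ⟨0, hnh ⟨0, hH⟩⟩⟩⟩)
          (fun p : Clustered H nh => v p.1 p.2)) *
        frobNormW u (x - rowRep (Clustered H nh) (Matrix.vecMul u x)) +
      Real.sqrt H *
        (L * Finset.univ.sup'
          (Finset.univ_nonempty_iff.mpr ⟨⟨⟨0, hH⟩, ⟨0, hnh ⟨0, hH⟩⟩⟩⟩)
          (fun p : Clustered H nh => v p.1 p.2)) *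
        frobNorm (rowRep (Clustered H nh) (Matrix.vecMul u x) -
          rowRep (Clustered H nh) xstar) := by
  set M := Finset.univ.sup'
    (Finset.univ_nonempty_iff.mpr ⟨⟨⟨0, hH⟩, ⟨0, hnh ⟨0, hH⟩⟩⟩⟩)
    (fun p : Clustered H nh => v p.1 p.2) with hMdef
  set d := Finset.univ.sup'
    (Finset.univ_nonempty_iff.mpr ⟨⟨⟨0, hH⟩, ⟨0, hnh ⟨0, hH⟩⟩⟩⟩)
    (fun i : Clustered H nh => (Real.sqrt (u i))⁻¹) with hddef
  have hM : ∀ p : Clustered H nh, v p.1 p.2 ≤ M := fun p =>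
    Finset.le_sup' (fun p : Clustered H nh => v p.1 p.2) (Finset.mem_univ p)
  have hd : ∀ p : Clustered H nh, (Real.sqrt (u p))⁻¹ ≤ d := fun p =>
    Finset.le_sup' (fun i : Clustered H nh => (Real.sqrt (u i))⁻¹) (Finset.mem_univ p)
  have p0 : Clustered H nh := ⟨⟨0, hH⟩, ⟨0, hnh ⟨0, hH⟩⟩⟩
  have hM0 : 0 ≤ M := (hv _ _).le.trans (hM p0)
  have hd0 : 0 ≤ d := (inv_nonneg.2 (Real.sqrt_nonneg _)).trans (hd p0)
  clear_value M d
  have hLM : 0 ≤ L * M := mul_nonneg hL.le hM0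
  set w : (h : Fin H) → Matrix (Fin (nh h)) (Fin (qh h)) ℝ := fun h =>
    Matrix.of (fun i jj => v h i * ((nh h : ℝ)⁻¹ * ∑ i', y h i' jj)) with hw
  change frobNorm (blk y) ≤ (∑ h, frobNorm (y h - w h)) + _ + _
  set xb := Matrix.vecMul u x
  have e1 : frobNorm (blk y) ≤ (∑ h, frobNorm (y h - w h)) + frobNorm (blk w) := by
    have : blk y = blk (fun h => y h - w h) + blk w := by
      rw [← blk_add]; simp
    rw [this]
    exact (frobNorm_add_le' _ _).trans (add_le_add_left (blk_le_sum _) _)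
  have e2 : frobNorm (blk w) ≤ L * M * frobNorm (x - rowRep (Clustered H nh) xstar) := by
    refine (sq_le_sq₀ (frobNorm_nonneg' _) (mul_nonneg hLM (frobNorm_nonneg' _))).1 ?_
    rw [mul_pow, blk_sq, frobNorm_sq', Fintype.sum_sigma, Finset.mul_sum]
    refine Finset.sum_le_sum fun h _ => ?_
    rw [frobNorm_sq']
    exact cluster_bound (hnh h) (gradf h) L hL (hlip h) xstar (fun jj => hstar ⟨h, jj⟩)
      (v h) (hv h) M (fun i => hM ⟨h, i⟩) (fun i => x ⟨h, i⟩) _ (hybar h)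
  have e3 : frobNorm (x - rowRep (Clustered H nh) xstar) ≤
      d * frobNormW u (x - rowRep (Clustered H nh) xb) +
        frobNorm (rowRep (Clustered H nh) xb - rowRep (Clustered H nh) xstar) := by
    rw [← sub_add_sub_cancel x (rowRep (Clustered H nh) xb) (rowRep (Clustered H nh) xstar)]
    exact (frobNorm_add_le' _ _).trans
      (add_le_add_left (frobNorm_le_weighted u hu d hd0 hd _) _)
  have e4 : (1 : ℝ) ≤ Real.sqrt H := by
    rw [Real.one_le_sqrt]
    exact_mod_cast hH
  have hA : 0 ≤ frobNormW u (x - rowRep (Clustered H nh) xb) := frobNorm_nonneg' _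
  have hB := frobNorm_nonneg' (rowRep (Clustered H nh) xb - rowRep (Clustered H nh) xstar)
  set A := frobNormW u (x - rowRep (Clustered H nh) xb)
  set B := frobNorm (rowRep (Clustered H nh) xb - rowRep (Clustered H nh) xstar)
  have e5 : frobNorm (blk w) ≤ L * M * (d * A + B) :=
    e2.trans (mul_le_mul_of_nonneg_left e3 hLM)
  have e6 : L * M * (d * A + B) ≤ Real.sqrt H * (L * M * (d * A + B)) :=
    le_mul_of_one_le_left (by positivity) e4
  calc frobNorm (blk y) ≤ _ := e1
    _ ≤ (∑ h, frobNorm (y h - w h)) + Real.sqrt H * (L * M * (d * A + B)) := by linarith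
    _ = _ := by ring
end
end
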